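/- arXiv:2605.26482 — 2 statements merged into one kernel-verified Lean document; each statement's English description precedes it below -/
import Mathlib

section
/- There exists a positive real number r₀ such that for every real number r > r₀, the set of values {C_{r,ℚ,χ} : χ a Dirichlet character (of any modulus)} equals the set of all positive integers. -/
/-- The twisted divisor function `σ_{r,ℚ,χ}(n) = ∑_{d ∣ n} χ(d) d^{-r}` on positive integers. -/
noncomputable def sigmaQ {m : ℕ} (χ : DirichletCharacter ℂ m) (r : ℝ) (n : ℕ) : ℂ :=
  ∑ d ∈ n.divisors, χ ((d : ℕ) : ZMod m) * (((d : ℝ) ^ (-r) : ℝ) : ℂ)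

lemma abel_identity (f : ℕ → ℂ) (w : ℕ → ℝ) (a b : ℕ) (hab : a ≤ b) :
    ∑ i ∈ Finset.Ico a b, (w i : ℂ) * f i =
      w b * (∑ i ∈ Finset.range b, f i) - w a * (∑ i ∈ Finset.range a, f i)
        + ∑ i ∈ Finset.Ico a b, ((w i - w (i+1) : ℝ) : ℂ) * ∑ j ∈ Finset.range (i+1), f j := by
  induction b, hab using Nat.le_induction with
  | base => simp
  | succ b hb ih =>
    rw [Finset.sum_Ico_succ_top hb, Finset.sum_Ico_succ_top hb, ih, Finset.sum_range_succ]
    push_cast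
    ring

lemma abel_bound (f : ℕ → ℂ) (w : ℕ → ℝ) (B : ℝ) (hB : ∀ n, ‖∑ i ∈ Finset.range n, f i‖ ≤ B)
    (a b : ℕ) (hab : a ≤ b) (hw0 : ∀ i, a ≤ i → 0 ≤ w i)
    (hw : ∀ i, a ≤ i → w (i+1) ≤ w i) :
    ‖∑ i ∈ Finset.Ico a b, (w i : ℂ) * f i‖ ≤ 2 * B * w a := by
  have hB0 : 0 ≤ B := (norm_nonneg _).trans (hB 0)
  rw [abel_identity f w a b hab]
  have h1 : ‖∑ i ∈ Finset.Ico a b, ((w i - w (i+1) : ℝ) : ℂ) * ∑ j ∈ Finset.range (i+1), f j‖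
      ≤ B * (w a - w b) := by
    calc _ ≤ ∑ i ∈ Finset.Ico a b, B * (w i - w (i+1)) := by
          refine norm_sum_le_of_le _ fun i hi => ?_
          have := hw i (Finset.mem_Ico.1 hi).1
          rw [norm_mul, Complex.norm_real, Real.norm_eq_abs, abs_of_nonneg (by linarith), mul_comm]
          exact mul_le_mul_of_nonneg_right (hB _) (by linarith)
      _ = B * (w a - w b) := by
          rw [← Finset.mul_sum, Finset.sum_Ico_eq_sum_range]
          congr 1
          have := Finset.sum_range_sub' (fun k => w (a + k)) (b - a)
          simp only [← add_assoc] at this ⊢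
          rw [this, Nat.add_sub_cancel' hab, add_zero]
  have h2 : ‖(w b : ℂ) * (∑ i ∈ Finset.range b, f i)‖ ≤ B * w b := by
    rw [norm_mul, Complex.norm_real, Real.norm_eq_abs, abs_of_nonneg (hw0 b hab), mul_comm]
    exact mul_le_mul_of_nonneg_right (hB _) (hw0 b hab)
  have h3 : ‖(w a : ℂ) * (∑ i ∈ Finset.range a, f i)‖ ≤ B * w a := by
    rw [norm_mul, Complex.norm_real, Real.norm_eq_abs, abs_of_nonneg (hw0 a le_rfl), mul_comm]
    exact mul_le_mul_of_nonneg_right (hB _) (hw0 a le_rfl)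
  calc _ ≤ ‖(w b : ℂ) * (∑ i ∈ Finset.range b, f i)‖ + ‖(w a : ℂ) * (∑ i ∈ Finset.range a, f i)‖
        + B * (w a - w b) := by
        refine (norm_add_le _ _).trans (add_le_add (norm_sub_le _ _) h1)
    _ ≤ _ := by nlinarith

lemma char_sum_bound {m : ℕ} [NeZero m] (χ : DirichletCharacter ℂ m) (hχ : χ ≠ 1) (n : ℕ) :
    ‖∑ i ∈ Finset.range n, χ (i : ZMod m)‖ ≤ m := by
  have hm : ∑ i ∈ Finset.range m, χ (i : ZMod m) = 0 := by
    rw [← MulChar.sum_eq_zero_of_ne_one hχ]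
    refine Finset.sum_bij (fun i _ => (i : ZMod m)) (by simp) ?_ ?_ (by simp)
    · intro a ha b hb hab
      rw [ZMod.natCast_eq_natCast_iff'] at hab
      rwa [Nat.mod_eq_of_lt (Finset.mem_range.1 ha), Nat.mod_eq_of_lt (Finset.mem_range.1 hb)] at hab
    · intro b _
      exact ⟨b.val, by simpa using ZMod.val_lt b, by simp⟩
  induction n using Nat.strong_induction_on with
  | _ n ih =>
    rcases lt_or_ge n m with h | h
    · calc _ ≤ ∑ i ∈ Finset.range n, (1:ℝ) := norm_sum_le_of_le _ fun i _ => χ.norm_le_one _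
        _ ≤ m := by simpa using h.le
    · obtain ⟨k, rfl⟩ := Nat.exists_eq_add_of_le h
      rw [Finset.sum_range_add, hm, zero_add]
      simpa using ih k (by have := NeZero.pos m; omega)

open ArithmeticFunction in
lemma mertens_one (N : ℕ) (hN : 0 < N) :
    |∑ n ∈ Finset.Ioc 0 N, vonMangoldt n / n - Real.log N| ≤ 10 := by
  have h := sum_Ioc_mul_zeta_eq_sum vonMangoldt N
  rw [vonMangoldt_mul_zeta] at h
  have hN' : (0:ℝ) < N := by exact_mod_cast hN
  have hlog : ∑ n ∈ Finset.Ioc 0 N, ArithmeticFunction.log n = Real.log (N.factorial) := by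
    clear h hN hN'
    induction N with
    | zero => simp
    | succ k ih =>
      rw [Finset.sum_Ioc_succ_top (by omega), ih, Nat.factorial_succ, Nat.cast_mul, Real.log_mul
        (by positivity) (by positivity), add_comm]
      simp
  rw [hlog] at h
  have hup : Real.log (N.factorial) ≤ N * Real.log N := by
    rw [← Real.log_pow]
    apply Real.log_le_log (by positivity)
    exact_mod_cast Nat.factorial_le_pow N
  have hlo : N * Real.log N - N ≤ Real.log N.factorial := by
    have := Stirling.le_log_factorial_stirling hN.ne'
    have h1 : 0 ≤ Real.log N := Real.log_natCast_nonneg N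
    have h2 : 0 ≤ Real.log (2 * Real.pi) := Real.log_nonneg (by nlinarith [Real.pi_gt_three])
    linarith
  have hpsi := Chebyshev.psi_le_const_mul_self hN'.le
  rw [Chebyshev.psi, Nat.floor_natCast] at hpsi
  have hl4 : Real.log 4 ≤ 3 := by
    have := Real.log_le_sub_one_of_pos (show (0:ℝ) < 4 by norm_num)
    linarith
  have hA : Real.log (N.factorial) ≤ N * ∑ n ∈ Finset.Ioc 0 N, vonMangoldt n / n := by
    rw [h, Finset.mul_sum]
    refine Finset.sum_le_sum fun d hd => ?_
    have : ((N / d : ℕ) : ℝ) ≤ N / d := Nat.cast_div_le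
    calc _ ≤ vonMangoldt d * (N / d) := mul_le_mul_of_nonneg_left this vonMangoldt_nonneg
      _ = _ := by ring
  have hB : N * ∑ n ∈ Finset.Ioc 0 N, vonMangoldt n / n ≤ 
      Real.log (N.factorial) + ∑ n ∈ Finset.Ioc 0 N, vonMangoldt n := by
    rw [h, Finset.mul_sum, ← Finset.sum_add_distrib]
    refine Finset.sum_le_sum fun d hd => ?_
    have hd0 : 0 < d := (Finset.mem_Ioc.1 hd).1
    have : (N : ℝ) / d ≤ ((N / d : ℕ) : ℝ) + 1 := by
      have := Nat.lt_floor_add_one ((N:ℝ) / d)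
      rw [Nat.floor_div_natCast, Nat.floor_natCast] at this
      exact this.le
    calc _ = vonMangoldt d * (N / d) := by ring
      _ ≤ vonMangoldt d * (((N / d : ℕ) : ℝ) + 1) := mul_le_mul_of_nonneg_left this vonMangoldt_nonneg
      _ = _ := by ring
  rw [abs_le]
  constructor
  · have : N * (∑ n ∈ Finset.Ioc 0 N, vonMangoldt n / n) ≥ N * (Real.log N - 1) := by nlinarith
    have := le_of_mul_le_mul_left this hN'
    linarith
  · have : N * (∑ n ∈ Finset.Ioc 0 N, vonMangoldt n / n) ≤ N * (Real.log N + 7) := by nlinarith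
    have := le_of_mul_le_mul_left this hN'
    linarith

lemma char_partial_L_one {m : ℕ} [NeZero m] (χ : DirichletCharacter ℂ m) (hχ : χ ≠ 1) (N : ℕ) :
    ‖DirichletCharacter.LFunction χ 1 - ∑ n ∈ Finset.range (N+1), χ (n : ZMod m) / n‖
      ≤ 2 * m / ((N + 1 : ℕ) : ℝ) := by
  have key : ∀ s : ℝ, 1 < s →
      ‖DirichletCharacter.LFunction χ (s : ℂ) -
        ∑ n ∈ Finset.range (N+1), (((n : ℝ) ^ (-s) : ℝ) : ℂ) * χ (n : ZMod m)‖
      ≤ 2 * m / ((N + 1 : ℕ) : ℝ) := by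
    intro s hs
    have hsum : LSeriesSummable (fun n => χ (n : ZMod m)) (s : ℂ) :=
      DirichletCharacter.LSeriesSummable_of_one_lt_re χ (by simpa using hs)
    rw [DirichletCharacter.LFunction_eq_LSeries χ (by simpa using hs)]
    have hterm : ∀ n : ℕ, LSeries.term (fun n => χ (n : ZMod m)) (s : ℂ) n
        = (((n : ℝ) ^ (-s) : ℝ) : ℂ) * χ (n : ZMod m) := by
      intro n
      rcases Nat.eq_zero_or_pos n with rfl | hn
      · simp [Real.zero_rpow (show -s ≠ 0 by linarith)]
      · rw [LSeries.term_of_ne_zero hn.ne', Real.rpow_neg (by positivity),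
          Complex.ofReal_inv, Complex.ofReal_cpow (by positivity)]
        push_cast
        rw [div_eq_mul_inv, mul_comm]
    have ht : Filter.Tendsto (fun M : ℕ => ∑ n ∈ Finset.range M,
        (((n : ℝ) ^ (-s) : ℝ) : ℂ) * χ (n : ZMod m)) Filter.atTop
        (nhds (LSeries (fun n => χ (n : ZMod m)) (s : ℂ))) := by
      have := hsum.hasSum.tendsto_sum_nat
      simp only [hterm] at this
      convert this using 2
      rw [LSeries]
      simp only [hterm]
    have ht2 := (ht.sub_const (∑ n ∈ Finset.range (N+1),
      (((n : ℝ) ^ (-s) : ℝ) : ℂ) * χ (n : ZMod m))).norm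
    refine le_of_tendsto ht2 ?_
    filter_upwards [Filter.eventually_ge_atTop (N+1)] with M hM
    rw [← Finset.sum_Ico_eq_sub _ hM]
    have h1 := abel_bound (fun n => χ (n : ZMod m)) (fun n => (n:ℝ) ^ (-s)) m
      (char_sum_bound χ hχ) (N+1) M hM (fun i _ => by positivity)
      (fun i hi => by
        have : 0 < i := by omega
        exact Real.rpow_le_rpow_of_nonpos (by positivity) (by push_cast; linarith) (by linarith))
    refine h1.trans ?_
    rw [div_eq_mul_inv]
    refine mul_le_mul_of_nonneg_left ?_ (by positivity)
    rw [← Real.rpow_neg_one]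
    exact Real.rpow_le_rpow_of_exponent_le (by push_cast; linarith [(Nat.cast_nonneg N : (0:ℝ) ≤ N)]) (by linarith)
  have hc1 : Filter.Tendsto (fun s : ℝ => DirichletCharacter.LFunction χ (s : ℂ))
      (nhdsWithin 1 (Set.Ioi 1)) (nhds (DirichletCharacter.LFunction χ 1)) := by
    have := ((DirichletCharacter.differentiable_LFunction hχ).continuous.comp
      Complex.continuous_ofReal).tendsto 1
    simp only [Function.comp_def, Complex.ofReal_one] at this
    exact this.mono_left nhdsWithin_le_nhds
  have hc2 : Filter.Tendsto (fun s : ℝ => ∑ n ∈ Finset.range (N+1),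
      (((n : ℝ) ^ (-s) : ℝ) : ℂ) * χ (n : ZMod m))
      (nhdsWithin 1 (Set.Ioi 1)) (nhds (∑ n ∈ Finset.range (N+1), χ (n : ZMod m) / n)) := by
    refine tendsto_finsetSum _ fun n _ => ?_
    rcases Nat.eq_zero_or_pos n with rfl | hn
    · simp only [Nat.cast_zero, div_zero]
      refine Filter.Tendsto.congr' ?_ tendsto_const_nhds
      filter_upwards [self_mem_nhdsWithin] with s hs
      rw [Set.mem_Ioi] at hs
      simp [Real.zero_rpow (show -s ≠ 0 by linarith)]
    · have : Continuous fun s : ℝ => (((n : ℝ) ^ (-s) : ℝ) : ℂ) * χ (n : ZMod m) := by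
        have h0 : (0:ℝ) < n := by exact_mod_cast hn
        have : Continuous fun s : ℝ => (n : ℝ) ^ (-s) :=
          Real.continuous_const_rpow h0.ne' |>.comp continuous_neg
        fun_prop
      have h := this.tendsto 1
      rw [Real.rpow_neg_one] at h
      convert h.mono_left nhdsWithin_le_nhds using 2
      push_cast
      ring
  refine le_of_tendsto (hc1.sub hc2).norm ?_
  filter_upwards [self_mem_nhdsWithin] with s hs
  exact key s hs

lemma char_log_bound {m : ℕ} [NeZero m] (χ : DirichletCharacter ℂ m) (hχ : χ ≠ 1) :
    ∃ C : ℝ, ∀ N : ℕ, ‖∑ n ∈ Finset.Ioc 0 N, χ (n : ZMod m) / n * (Real.log n : ℂ)‖ ≤ C := by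
  refine ⟨(∑ n ∈ Finset.range 3, ‖χ (n : ZMod m) / n * (Real.log n : ℂ)‖) +
    2 * m * (Real.log (3:ℕ) / (3:ℕ)), fun N => ?_⟩
  have h0 : ∑ n ∈ Finset.Ioc 0 N, χ (n : ZMod m) / n * (Real.log n : ℂ) =
      ∑ n ∈ Finset.range (N+1), χ (n : ZMod m) / n * (Real.log n : ℂ) := by
    rw [Finset.sum_subset (s₂ := Finset.range (N+1))]
    · intro x hx; simp at hx ⊢; omega
    · intro x hx hx'
      have : x = 0 := by simp at hx hx'; omega
      subst this; simp
  rw [h0]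
  have hlog : 0 ≤ Real.log (3:ℕ) := Real.log_natCast_nonneg 3
  rcases lt_or_ge (N+1) 3 with h | h
  · calc _ ≤ ∑ n ∈ Finset.range (N+1), ‖χ (n : ZMod m) / n * (Real.log n : ℂ)‖ := norm_sum_le _ _
      _ ≤ ∑ n ∈ Finset.range 3, ‖χ (n : ZMod m) / n * (Real.log n : ℂ)‖ :=
        Finset.sum_le_sum_of_subset_of_nonneg (by simpa using h.le) (by intros; positivity)
      _ ≤ _ := by
        have : 0 ≤ 2 * (m:ℝ) * (Real.log (3:ℕ) / (3:ℕ)) := by positivity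
        linarith
  · rw [← Finset.sum_range_add_sum_Ico _ h]
    refine (norm_add_le _ _).trans (add_le_add (norm_sum_le _ _) ?_)
    have h1 := abel_bound (fun n => χ (n : ZMod m)) (fun n => Real.log n / n) m
      (char_sum_bound χ hχ) 3 (N+1) h (fun i _ => div_nonneg (Real.log_natCast_nonneg i) (by positivity))
      (fun i hi => by
        have he := Real.exp_one_lt_d9
        have : (3:ℝ) ≤ i := by exact_mod_cast hi
        exact Real.log_div_self_antitoneOn (by simp; linarith) (by simp; linarith)
          (by push_cast; linarith))
    refine le_trans (le_of_eq ?_) h1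
    congr 1
    refine Finset.sum_congr rfl fun n _ => ?_
    push_cast
    ring

open ArithmeticFunction in
lemma char_mertens {m : ℕ} [NeZero m] (χ : DirichletCharacter ℂ m) (hχ : χ ≠ 1) :
    ∃ C : ℝ, ∀ N : ℕ, ‖∑ n ∈ Finset.Ioc 0 N, χ (n : ZMod m) / n * (vonMangoldt n : ℂ)‖ ≤ C := by
  obtain ⟨C, hC⟩ := char_log_bound χ hχ
  have hL := DirichletCharacter.LFunction_apply_one_ne_zero hχ
  set L := DirichletCharacter.LFunction χ 1 with hLdef
  refine ⟨‖L‖⁻¹ * (2 * m * (Real.log 4 + 4) + C), fun N => ?_⟩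
  rcases Nat.eq_zero_or_pos N with rfl | hN
  · have hC0 := (norm_nonneg _).trans (hC 0)
    have : 0 ≤ Real.log 4 := Real.log_nonneg (by norm_num)
    simp; positivity
  let f : ArithmeticFunction ℂ := ⟨fun n => χ (n : ZMod m) / n * (vonMangoldt n : ℂ), by simp⟩
  let g : ArithmeticFunction ℂ := ⟨fun n => χ (n : ZMod m) / n, by simp⟩
  have hfg : ∀ n, (f * g) n = χ (n : ZMod m) / n * (Real.log n : ℂ) := by
    intro n
    rw [ArithmeticFunction.mul_apply, ← vonMangoldt_sum, Complex.ofReal_sum, Finset.mul_sum,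
      ← Nat.sum_divisorsAntidiagonal (fun i _ => χ (n : ZMod m) / n * (vonMangoldt i : ℂ))]
    refine Finset.sum_congr rfl fun x hx => ?_
    obtain ⟨hx1, hx2⟩ := Nat.mem_divisorsAntidiagonal.1 hx
    change χ (x.1 : ZMod m) / x.1 * (vonMangoldt x.1 : ℂ) * (χ (x.2 : ZMod m) / x.2) = _
    rw [← hx1]
    push_cast
    rw [map_mul]
    ring
  have hconv := sum_Ioc_mul_eq_sum_sum f g N
  simp only [hfg] at hconv
  have hCN := hC N
  rw [hconv] at hCN
  have hid : L * ∑ n ∈ Finset.Ioc 0 N, f n =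
      ∑ n ∈ Finset.Ioc 0 N, f n * (L - ∑ k ∈ Finset.Ioc 0 (N / n), g k) +
      ∑ n ∈ Finset.Ioc 0 N, f n * ∑ k ∈ Finset.Ioc 0 (N / n), g k := by
    rw [← Finset.sum_add_distrib, Finset.mul_sum]
    refine Finset.sum_congr rfl fun n _ => by ring
  have hN' : (0:ℝ) < N := by exact_mod_cast hN
  have hpsi := Chebyshev.psi_le_const_mul_self hN'.le
  rw [Chebyshev.psi, Nat.floor_natCast] at hpsi
  have hA : ‖∑ n ∈ Finset.Ioc 0 N, f n * (L - ∑ k ∈ Finset.Ioc 0 (N / n), g k)‖ ≤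
      2 * m * (Real.log 4 + 4) := by
    calc _ ≤ ∑ n ∈ Finset.Ioc 0 N, (2 * m / N) * vonMangoldt n := by
          refine norm_sum_le_of_le _ fun n hn => ?_
          have hn0 : 0 < n := (Finset.mem_Ioc.1 hn).1
          have hn0' : (0:ℝ) < n := by exact_mod_cast hn0
          have h0 : ∑ k ∈ Finset.Ioc 0 (N / n), g k =
              ∑ k ∈ Finset.range (N / n + 1), χ (k : ZMod m) / k := by
            rw [Finset.sum_subset (s₂ := Finset.range (N / n +1))]
            · rfl
            · intro x hx; simp at hx ⊢; omega
            · intro x hx hx'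
              have : x = 0 := by simp at hx hx'; omega
              subst this; simp
          have h1 := char_partial_L_one χ hχ (N / n)
          rw [h0, norm_mul]
          have h2 : ‖f n‖ ≤ vonMangoldt n / n := by
            change ‖χ (n : ZMod m) / n * (vonMangoldt n : ℂ)‖ ≤ _
            rw [norm_mul, norm_div, Complex.norm_natCast, Complex.norm_real, Real.norm_eq_abs,
              abs_of_nonneg vonMangoldt_nonneg]
            have := χ.norm_le_one (n : ZMod m)
            have hv : 0 ≤ vonMangoldt n := vonMangoldt_nonneg
            calc _ ≤ 1 / (n:ℝ) * vonMangoldt n := by gcongr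
              _ = _ := by ring
          have h3 : (N : ℝ) / n ≤ ((N / n + 1 : ℕ) : ℝ) := by
            have := Nat.lt_floor_add_one ((N:ℝ) / n)
            rw [Nat.floor_div_natCast, Nat.floor_natCast] at this
            push_cast
            exact this.le
          calc _ ≤ vonMangoldt n / n * (2 * m / ((N / n + 1 : ℕ) : ℝ)) := by
                gcongr
            _ ≤ vonMangoldt n / n * (2 * m / ((N : ℝ) / n)) := by
                gcongr
            _ = _ := by field_simp
      _ = 2 * m / N * ∑ n ∈ Finset.Ioc 0 N, vonMangoldt n := by rw [Finset.mul_sum]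
      _ ≤ 2 * m / N * ((Real.log 4 + 4) * N) := by gcongr
      _ = _ := by field_simp
  have hfin : ‖L‖ * ‖∑ n ∈ Finset.Ioc 0 N, f n‖ ≤ 2 * m * (Real.log 4 + 4) + C := by
    rw [← norm_mul, hid]
    exact (norm_add_le _ _).trans (add_le_add hA hCN)
  rw [← div_eq_inv_mul, le_div_iff₀ (by simpa using hL), mul_comm]
  exact hfin

open ArithmeticFunction in
lemma summable_nonprime : Summable fun n : ℕ => (if n.Prime then 0 else vonMangoldt n) / n := by
  have := vonMangoldt.summable_residueClass_non_primes_div (q := 1) (a := 0)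
  convert this using 4 with n
  simp only [vonMangoldt.residueClass]
  rw [Set.indicator_of_mem]
  exact Subsingleton.elim _ _

open ArithmeticFunction in
lemma summable_nonunit (m : ℕ) [NeZero m] :
    Summable fun n : ℕ => (if IsUnit (n : ZMod m) then 0 else vonMangoldt n / n) := by
  have h2 : Summable fun n : ℕ => (if n ∈ m.divisors then vonMangoldt n / n else 0) := by
    refine summable_of_hasFiniteSupport ((m.divisors : Set ℕ).toFinite.subset fun n hn => ?_)
    by_contra h
    simp at h hn
    exact absurd hn.2 (by tauto)
  refine Summable.of_nonneg_of_le (fun n => ?_) (fun n => ?_) (summable_nonprime.add h2)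
  · split_ifs
    · exact le_rfl
    · exact div_nonneg vonMangoldt_nonneg (by positivity)
  · have h0 : 0 ≤ vonMangoldt n / n := div_nonneg vonMangoldt_nonneg (by positivity)
    by_cases hp : n.Prime
    · by_cases hd : n ∣ m
      · simp only [hp, if_true, Nat.mem_divisors, hd, NeZero.ne m, ne_eq, not_false_eq_true,
          and_self, zero_div, zero_add]
        split_ifs <;> linarith
      · have : IsUnit (n : ZMod m) := by
          rw [ZMod.isUnit_iff_coprime]
          exact (Nat.Prime.coprime_iff_not_dvd hp).2 hd
        simp only [this, if_true, hp]
        split_ifs <;> simp [h0]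
    · simp only [hp, if_false]
      split_ifs <;> linarith

open ArithmeticFunction in
lemma char_mertens_all {m : ℕ} [NeZero m] (χ : DirichletCharacter ℂ m) :
    ∃ C : ℝ, ∀ N : ℕ, 0 < N → ‖∑ n ∈ Finset.Ioc 0 N, χ (n : ZMod m) / n * (vonMangoldt n : ℂ)
      - (if χ = 1 then (Real.log N : ℂ) else 0)‖ ≤ C := by
  by_cases hχ : χ = 1
  · subst hχ
    simp only [if_true]
    refine ⟨10 + ∑' n : ℕ, (if IsUnit (n : ZMod m) then 0 else vonMangoldt n / n), fun N hN => ?_⟩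
    have h1 := mertens_one N hN
    have h2 := (summable_nonunit m).sum_le_tsum (Finset.Ioc 0 N) (fun n _ => by
      split_ifs
      · exact le_rfl
      · exact div_nonneg vonMangoldt_nonneg (by positivity))
    have h3 : 0 ≤ ∑ n ∈ Finset.Ioc 0 N, (if IsUnit (n : ZMod m) then 0 else vonMangoldt n / n) :=
      Finset.sum_nonneg fun n _ => by
        split_ifs
        · exact le_rfl
        · exact div_nonneg vonMangoldt_nonneg (by positivity)
    have h4 : ∑ n ∈ Finset.Ioc 0 N, (1 : DirichletCharacter ℂ m) (n : ZMod m) / n * (vonMangoldt n : ℂ)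
      - (Real.log N : ℂ) = ((∑ n ∈ Finset.Ioc 0 N, vonMangoldt n / n - Real.log N
        - ∑ n ∈ Finset.Ioc 0 N, (if IsUnit (n : ZMod m) then 0 else vonMangoldt n / n) : ℝ) : ℂ) := by
      rw [sub_right_comm, ← Finset.sum_sub_distrib]
      push_cast
      congr 1
      refine Finset.sum_congr rfl fun n _ => ?_
      by_cases hu : IsUnit (n : ZMod m)
      · rw [MulChar.one_apply hu]; simp only [hu, if_true]; push_cast; ring
      · rw [MulChar.map_nonunit _ hu]; simp only [hu, if_false]; push_cast; ring
    rw [h4, Complex.norm_real, Real.norm_eq_abs]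
    rw [abs_le] at h1 ⊢
    constructor <;> linarith
  · obtain ⟨C, hC⟩ := char_mertens χ hχ
    exact ⟨C, fun N _ => by simpa [hχ] using hC N⟩

open ArithmeticFunction in
lemma ap_mertens {m : ℕ} [NeZero m] (a : ZMod m) (ha : IsUnit a) :
    ∃ C : ℝ, ∀ N : ℕ, 0 < N →
      |m.totient * ∑ n ∈ Finset.Ioc 0 N, vonMangoldt.residueClass a n / n - Real.log N| ≤ C := by
  choose C hC using fun χ : DirichletCharacter ℂ m => char_mertens_all χ
  refine ⟨∑ χ, C χ, fun N hN => ?_⟩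
  have htot : (m.totient : ℂ) ≠ 0 := by
    exact_mod_cast (Nat.totient_pos.mpr m.pos_of_neZero).ne'
  have ha' : IsUnit (a⁻¹) := by
    obtain ⟨u, rfl⟩ := ha
    exact ⟨u⁻¹, by simp⟩
  have hid : ((m.totient * ∑ n ∈ Finset.Ioc 0 N, vonMangoldt.residueClass a n / n - Real.log N : ℝ) : ℂ)
      = ∑ χ : DirichletCharacter ℂ m, χ a⁻¹ *
        (∑ n ∈ Finset.Ioc 0 N, χ (n : ZMod m) / n * (vonMangoldt n : ℂ)
      - (if χ = 1 then (Real.log N : ℂ) else 0)) := by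
    simp only [mul_sub, Finset.sum_sub_distrib]
    push_cast
    congr 1
    · simp only [vonMangoldt.residueClass_apply ha]
      simp_rw [Finset.mul_sum]
      conv_rhs => rw [Finset.sum_comm]
      refine Finset.sum_congr rfl fun n _ => ?_
      rw [← Finset.mul_sum, mul_div_assoc, ← mul_assoc, mul_inv_cancel₀ htot, one_mul, Finset.sum_div]
      refine Finset.sum_congr rfl fun χ _ => ?_
      ring
    · simp [MulChar.one_apply ha']
  rw [← Real.norm_eq_abs, ← Complex.norm_real, hid]
  refine norm_sum_le_of_le _ fun χ _ => ?_
  rw [norm_mul]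
  calc _ ≤ 1 * _ := mul_le_mul_of_nonneg_right (χ.norm_le_one _) (norm_nonneg _)
    _ ≤ _ := by rw [one_mul]; exact hC χ N hN

open ArithmeticFunction in
lemma ap_mertens_prime {m : ℕ} [NeZero m] (a : ZMod m) (ha : IsUnit a) :
    ∃ C : ℝ, ∀ N : ℕ, 0 < N →
      |m.totient * ∑ n ∈ Finset.Ioc 0 N, (if n.Prime ∧ (n : ZMod m) = a then Real.log n / n else 0)
        - Real.log N| ≤ C := by
  obtain ⟨C, hC⟩ := ap_mertens a ha
  have hs := vonMangoldt.summable_residueClass_non_primes_div (a := a)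
  have h0 : ∀ n : ℕ, 0 ≤ (if n.Prime then 0 else vonMangoldt.residueClass a n) / n := fun n => by
    split_ifs
    · simp
    · exact div_nonneg (vonMangoldt.residueClass_nonneg a n) (by positivity)
  refine ⟨C + m.totient * ∑' n : ℕ, (if n.Prime then 0 else vonMangoldt.residueClass a n) / n,
    fun N hN => ?_⟩
  have h2 := hs.sum_le_tsum (Finset.Ioc 0 N) (fun n _ => h0 n)
  have h3 := Finset.sum_nonneg (s := Finset.Ioc 0 N) (fun n _ => h0 n)
  have hid : ∑ n ∈ Finset.Ioc 0 N, (if n.Prime ∧ (n : ZMod m) = a then Real.log n / n else 0)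
      = ∑ n ∈ Finset.Ioc 0 N, vonMangoldt.residueClass a n / n -
       ∑ n ∈ Finset.Ioc 0 N, (if n.Prime then 0 else vonMangoldt.residueClass a n) / n := by
    rw [← Finset.sum_sub_distrib]
    refine Finset.sum_congr rfl fun n _ => ?_
    by_cases hp : n.Prime
    · simp [hp, vonMangoldt.residueClass, Set.indicator_apply, vonMangoldt_apply_prime hp, ite_div]
    · simp [hp]
  rw [hid, mul_sub]
  have h4 := mul_le_mul_of_nonneg_left h2 (show (0:ℝ) ≤ m.totient by positivity)
  have h5 := mul_nonneg (show (0:ℝ) ≤ m.totient by positivity) h3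
  have h1 := hC N hN
  rw [abs_le] at h1 ⊢
  constructor <;> linarith

lemma prime_ap {m : ℕ} [NeZero m] (a : ZMod m) (ha : IsUnit a) (r : ℝ) (hr : 1 < r) (C : ℝ) :
    ∃ N₀ : ℕ, ∀ N : ℕ, N₀ ≤ N → ∃ F : Finset ℕ,
      (∀ q ∈ F, q.Prime ∧ (q : ZMod m) = a ∧ N < q) ∧ C * (N:ℝ) ^ (-r) ≤ ∑ q ∈ F, (q:ℝ) ^ (-r) := by
  obtain ⟨D, hD⟩ := ap_mertens_prime a ha
  obtain ⟨K, hK⟩ := exists_nat_ge (Real.exp (2 * D + 1))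
  have hK0 : (0:ℝ) < K := (Real.exp_pos _).trans_le hK
  have hlogK : 2 * D + 1 ≤ Real.log K := by rwa [Real.le_log_iff_exp_le hK0]
  have hD0 : 0 ≤ D := (abs_nonneg _).trans (hD 1 one_pos)
  have hK1 : (1:ℝ) ≤ K := by
    by_contra h
    have := Real.log_nonpos hK0.le (not_le.1 h).le
    linarith
  have hphi : (0:ℝ) < m.totient := by
    exact_mod_cast Nat.totient_pos.mpr m.pos_of_neZero
  set C' := max C 1
  have hC'0 : 0 < C' := lt_of_lt_of_le one_pos (le_max_right _ _)
  set ε := (K:ℝ) ^ (-r) / (m.totient * C') with hε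
  have hε0 : 0 < ε := by positivity
  have hlog := Real.isLittleO_log_id_atTop.bound hε0
  have hlog2 := (tendsto_natCast_atTop_atTop (R := ℝ)).const_mul_atTop hK0 |>.eventually hlog
  obtain ⟨N₁, hN₁⟩ := Filter.eventually_atTop.1 hlog2
  refine ⟨max N₁ 2, fun N hN => ?_⟩
  have hN2 : 2 ≤ N := (le_max_right _ _).trans hN
  have hN2' : (2:ℝ) ≤ N := by exact_mod_cast hN2
  have hNl := hN₁ N ((le_max_left _ _).trans hN)
  have hKN1 : 1 < (K:ℝ) * N := by nlinarith
  have hKNlog : 0 < Real.log (K * N) := Real.log_pos hKN1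
  rw [Real.norm_eq_abs, abs_of_pos hKNlog, id, Real.norm_eq_abs, abs_of_pos (by linarith)] at hNl
  have hKn : 1 ≤ K := by exact_mod_cast hK1
  let F := (Finset.Ioc N (K * N)).filter (fun q : ℕ => q.Prime ∧ (q : ZMod m) = a)
  refine ⟨F, fun q hq => ?_, ?_⟩
  · simp only [F, Finset.mem_filter, Finset.mem_Ioc] at hq
    exact ⟨hq.2.1, hq.2.2, hq.1.1⟩
  have hsplit := Finset.sum_Ioc_consecutive
    (fun n : ℕ => (if n.Prime ∧ (n : ZMod m) = a then Real.log n / n else 0)) (Nat.zero_le N)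
    (Nat.le_mul_of_pos_left N hKn)
  have hFsum : ∑ q ∈ F, Real.log q / q =
      ∑ n ∈ Finset.Ioc N (K*N), (if n.Prime ∧ (n : ZMod m) = a then Real.log n / n else 0) := by
    rw [Finset.sum_filter]
  have hlow : 1 ≤ m.totient * ∑ q ∈ F, Real.log q / q := by
    have e1 := abs_le.1 (hD N (by omega))
    have e2 := abs_le.1 (hD (K * N) (by positivity))
    rw [← hsplit] at e2
    push_cast at e2
    rw [Real.log_mul hK0.ne' (by positivity), mul_add, ← hFsum] at e2
    linarith [e1.2, e2.1]
  have hterm : ∀ q ∈ F, Real.log q / q * ((K * N : ℝ) ^ (1 - r) / Real.log (K * N)) ≤ (q:ℝ) ^ (-r) := by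
    intro q hq
    simp only [F, Finset.mem_filter, Finset.mem_Ioc] at hq
    have hqN : (N:ℝ) < q := by exact_mod_cast hq.1.1
    have hqK : (q:ℝ) ≤ K * N := by exact_mod_cast hq.1.2
    have hq0 : (0:ℝ) < q := by linarith
    have hlq : 0 < Real.log q := Real.log_pos (by linarith)
    have e1 : (K * N : ℝ) ^ (1 - r) ≤ (q:ℝ) ^ (1 - r) :=
      Real.rpow_le_rpow_of_nonpos hq0 hqK (by linarith)
    have e2 : Real.log q ≤ Real.log (K * N) := Real.log_le_log hq0 hqK
    have e3 : (q:ℝ) ^ (-r) = (q:ℝ) ^ (1 - r) / q := by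
      rw [Real.rpow_sub hq0, Real.rpow_one, Real.rpow_neg hq0.le]; field_simp
    rw [e3]
    calc _ ≤ Real.log q / q * ((q:ℝ) ^ (1 - r) / Real.log q) := by gcongr
      _ = _ := by field_simp
  have hsum := Finset.sum_le_sum hterm
  rw [← Finset.sum_mul] at hsum
  refine le_trans ?_ hsum
  have hN0 : (0:ℝ) < N := by linarith
  have hlow' : 1 / (m.totient:ℝ) ≤ ∑ q ∈ F, Real.log q / q := by
    rw [div_le_iff₀ hphi, mul_comm]; exact hlow
  calc C * (N:ℝ) ^ (-r) ≤ C' * (N:ℝ) ^ (-r) := by gcongr; exact le_max_left _ _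
    _ = 1 / (m.totient:ℝ) * ((K * N : ℝ) ^ (1 - r) / (ε * (K * N))) := by
      rw [Real.rpow_sub (by positivity), Real.rpow_one, Real.mul_rpow hK0.le hN0.le, hε,
        Real.rpow_neg hN0.le, Real.rpow_neg hK0.le]
      field_simp
    _ ≤ 1 / (m.totient:ℝ) * ((K * N : ℝ) ^ (1 - r) / Real.log (K * N)) := by gcongr
    _ ≤ _ := by gcongr

lemma kakeya (a : ℕ → ℝ) (h0 : ∀ n, 0 ≤ a n) (hs : Summable a)
    (h : ∀ n, a n ≤ ∑' k, a (k + (n+1))) (x : ℝ) (hx0 : 0 ≤ x) (hx : x ≤ ∑' n, a n) :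
    ∃ S : Set ℕ, HasSum (S.indicator a) x := by
  classical
  let R : ℕ → ℝ := fun n => Nat.rec (motive := fun _ => ℝ) x (fun n y => if a n ≤ y then y - a n else y) n
  have hR0 : R 0 = x := rfl
  have hRs : ∀ n : ℕ, R (n+1) = if a n ≤ R n then R n - a n else R n := fun n => rfl
  have htail : ∀ n, ∑' k, a (k + n) = a n + ∑' k, a (k + (n+1)) := by
    intro n
    have := ((summable_nat_add_iff n).2 hs).tsum_eq_zero_add
    rw [this]
    simp only [zero_add]
    congr 2
    ext k
    congr 1
    ring
  have hinv : ∀ n, 0 ≤ R n ∧ R n ≤ ∑' k, a (k + n) := by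
    intro n
    induction n with
    | zero => simpa [hR0] using ⟨hx0, hx⟩
    | succ n ih =>
      rw [hRs]
      have h1 := htail n
      have h2 := h n
      split_ifs with hc
      · exact ⟨by linarith, by linarith [ih.2]⟩
      · exact ⟨ih.1, by linarith⟩
  have hlim : Filter.Tendsto R Filter.atTop (nhds 0) :=
    squeeze_zero (fun n => (hinv n).1) (fun n => (hinv n).2) (tendsto_sum_nat_add a)
  refine ⟨{n | a n ≤ R n}, ?_⟩
  have hsum : Summable (Set.indicator {n | a n ≤ R n} a) := hs.indicator _
  have hpart : ∀ n, ∑ i ∈ Finset.range n, Set.indicator {n | a n ≤ R n} a i = x - R n := by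
    intro n
    induction n with
    | zero => simp [hR0]
    | succ n ih =>
      rw [Finset.sum_range_succ, ih, hRs, Set.indicator_apply]
      simp only [Set.mem_ofPred_eq]
      split_ifs <;> ring
  rw [hsum.hasSum_iff_tendsto_nat]
  simp only [hpart]
  simpa using hlim.const_sub x

lemma tail_ge (a : ℕ → ℝ) (h0 : ∀ n, 0 ≤ a n) (hs : Summable a) (n : ℕ) (F : Finset ℕ)
    (hF : ∀ q ∈ F, n ≤ q) : ∑ q ∈ F, a q ≤ ∑' k, a (k + n) := by
  have h1 := hs.sum_add_tsum_nat_add n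
  have hd : Disjoint F (Finset.range n) := by
    rw [Finset.disjoint_left]
    intro q hq hq'
    have := hF q hq
    simp at hq'
    omega
  have h2 := hs.sum_le_tsum (F ∪ Finset.range n) (fun i _ => h0 i)
  rw [Finset.sum_union hd] at h2
  linarith

def Rich (A : Set ℕ) (r : ℝ) : Prop :=
  ∀ C : ℝ, ∃ N₀ : ℕ, ∀ N : ℕ, N₀ ≤ N → ∃ F : Finset ℕ,
    (∀ q ∈ F, q.Prime ∧ q ∈ A ∧ N < q) ∧ C * (N:ℝ) ^ (-r) ≤ ∑ q ∈ F, (q:ℝ) ^ (-r)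

lemma kakeya_rich (A : Set ℕ) (r : ℝ) (hr : 1 < r) (hA : Rich A r) (b : ℕ → ℝ) (c₁ c₂ : ℝ)
    (hc₁ : 0 < c₁) (N₁ : ℕ)
    (hb : ∀ q, q.Prime → q ∈ A → N₁ ≤ q → c₁ * (q:ℝ) ^ (-r) ≤ b q ∧ b q ≤ c₂ * (q:ℝ) ^ (-r)) (D : ℝ) :
    ∃ N₀ : ℕ, ∀ N : ℕ, N₀ ≤ N → ∀ x : ℝ, |x| ≤ D * (N:ℝ) ^ (-r) → ∃ S₁ S₂ : Set ℕ, ∃ p₁ p₂ : ℝ,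
      (∀ q ∈ S₁, q.Prime ∧ q ∈ A ∧ N < q) ∧ (∀ q ∈ S₂, q.Prime ∧ q ∈ A ∧ N < q) ∧
      HasSum (S₁.indicator b) p₁ ∧ HasSum (S₂.indicator b) p₂ ∧ 0 ≤ p₁ ∧ 0 ≤ p₂ ∧
      p₁ - p₂ = x ∧ p₁ + p₂ = |x| := by
  classical
  obtain ⟨N₀, hN₀⟩ := hA (max c₂ D / c₁)
  refine ⟨max N₀ N₁, fun N hN => ?_⟩
  have hNN₀ : N₀ ≤ N := (le_max_left _ _).trans hN
  have hNN₁ : N₁ ≤ N := (le_max_right _ _).trans hN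
  let Q : Set ℕ := {q | q.Prime ∧ q ∈ A ∧ N < q}
  let a : ℕ → ℝ := Q.indicator b
  have hQ : ∀ q ∈ Q, c₁ * (q:ℝ) ^ (-r) ≤ a q ∧ a q ≤ c₂ * (q:ℝ) ^ (-r) := by
    intro q hq
    have := hb q hq.1 hq.2.1 (hNN₁.trans hq.2.2.le)
    simpa only [a, Set.indicator_of_mem hq] using this
  have h0 : ∀ n, 0 ≤ a n := by
    intro n
    by_cases hn : n ∈ Q
    · exact le_trans (by positivity) (hQ n hn).1
    · simp [a, hn]
  have hs : Summable a := by
    refine Summable.of_nonneg_of_le h0 (fun n => ?_)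
      ((Real.summable_nat_rpow.2 (show -r < -1 by linarith)).mul_left |c₂|)
    by_cases hn : n ∈ Q
    · refine (hQ n hn).2.trans ?_
      gcongr
      exact le_abs_self _
    · simp [a, hn]; positivity
  have hF : ∀ M : ℕ, N ≤ M → max c₂ D * (M:ℝ) ^ (-r) ≤ ∑' k, a (k + (M+1)) := by
    intro M hM
    obtain ⟨F, hF1, hF2⟩ := hN₀ M (hNN₀.trans hM)
    refine le_trans ?_ (tail_ge a h0 hs (M+1) F (fun q hq => (hF1 q hq).2.2))
    calc _ = c₁ * (max c₂ D / c₁ * (M:ℝ) ^ (-r)) := by field_simp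
      _ ≤ c₁ * ∑ q ∈ F, (q:ℝ) ^ (-r) := by gcongr
      _ = ∑ q ∈ F, c₁ * (q:ℝ) ^ (-r) := by rw [Finset.mul_sum]
      _ ≤ _ := Finset.sum_le_sum fun q hq => (hQ q ⟨(hF1 q hq).1, (hF1 q hq).2.1,
        lt_of_le_of_lt hM (hF1 q hq).2.2⟩).1
  have hcond : ∀ n, a n ≤ ∑' k, a (k + (n+1)) := by
    intro n
    by_cases hn : n ∈ Q
    · refine (hQ n hn).2.trans (le_trans ?_ (hF n hn.2.2.le))
      gcongr
      exact le_max_left _ _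
    · simp only [a, Set.indicator_of_notMem hn]
      exact tsum_nonneg fun k => h0 _
  have main : ∀ x : ℝ, 0 ≤ x → x ≤ D * (N:ℝ) ^ (-r) → ∃ S : Set ℕ,
      (∀ q ∈ S, q.Prime ∧ q ∈ A ∧ N < q) ∧ HasSum (S.indicator b) x := by
    intro x hx0 hx
    obtain ⟨S, hS⟩ := kakeya a h0 hs hcond x hx0 (by
      have e1 := hF N le_rfl
      have e2 : ∑' k, a (k + (N+1)) ≤ ∑' n, a n := by
        have := hs.sum_add_tsum_nat_add (N+1)
        have h3 : 0 ≤ ∑ i ∈ Finset.range (N+1), a i := Finset.sum_nonneg fun i _ => h0 i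
        linarith
      have e3 : D * (N:ℝ) ^ (-r) ≤ max c₂ D * (N:ℝ) ^ (-r) := by
        gcongr
        exact le_max_right _ _
      linarith)
    refine ⟨S ∩ Q, fun q hq => hq.2, ?_⟩
    rwa [Set.indicator_indicator] at hS
  intro x hx
  rcases le_total 0 x with h | h
  · rw [abs_of_nonneg h] at hx
    obtain ⟨S, hS1, hS2⟩ := main x h hx
    exact ⟨S, ∅, x, 0, hS1, by simp, hS2, by simpa using hasSum_zero, h, le_rfl, by simp,
      by simp [abs_of_nonneg h]⟩
  · rw [abs_of_nonpos h] at hx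
    obtain ⟨S, hS1, hS2⟩ := main (-x) (by linarith) hx
    exact ⟨∅, S, 0, -x, by simp, hS1, by simpa using hasSum_zero, hS2, le_rfl, by linarith, by simp,
      by simp [abs_of_nonpos h]⟩

def sig (g : ℕ →* ℂ) (n : ℕ) : ℂ := ∑ d ∈ n.divisors, g d

def Rough (N : ℕ) : Set ℕ := {n | 0 < n ∧ ∀ p, p.Prime → p ∣ n → N < p}

def TT (g : ℕ →* ℂ) (N : ℕ) : Set ℂ := closure (sig g '' Rough N)

lemma sig_one (g : ℕ →* ℂ) : sig g 1 = 1 := by simp [sig]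

lemma sig_mul (g : ℕ →* ℂ) {a b : ℕ} (h : a.Coprime b) : sig g (a * b) = sig g a * sig g b := by
  unfold sig
  rw [Nat.divisors_mul, Finset.sum_mul_sum, ← Finset.sum_product',
    Finset.mul_def, Finset.sum_image]
  · simp
  · exact h.mul_injOn_divisors

lemma sig_prime_pow (g : ℕ →* ℂ) {p : ℕ} (hp : p.Prime) (k : ℕ) :
    sig g (p ^ k) = ∑ i ∈ Finset.range (k+1), g p ^ i := by
  unfold sig
  rw [Nat.sum_divisors_prime_pow hp]
  simp

lemma sig_prime (g : ℕ →* ℂ) {p : ℕ} (hp : p.Prime) : sig g p = 1 + g p := by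
  have := sig_prime_pow g hp 1
  simpa [Finset.sum_range_succ] using this

lemma rough_zero : Rough 0 = {k | 0 < k} := by
  ext n
  simp only [Rough, Set.mem_ofPred_eq]
  exact ⟨fun h => h.1, fun h => ⟨h, fun p hp _ => hp.pos⟩⟩

lemma rough_one_mem (N : ℕ) : 1 ∈ Rough N :=
  ⟨one_pos, fun p hp h => absurd (Nat.dvd_one.1 h) hp.ne_one⟩

lemma one_mem_TT (g : ℕ →* ℂ) (N : ℕ) : (1:ℂ) ∈ TT g N :=
  subset_closure ⟨1, rough_one_mem N, sig_one g⟩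

lemma rough_mono {M N : ℕ} (h : M ≤ N) : Rough N ⊆ Rough M :=
  fun _ hn => ⟨hn.1, fun p hp hd => lt_of_le_of_lt h (hn.2 p hp hd)⟩

lemma rough_succ_of_not_prime {N : ℕ} (h : ¬ (N+1).Prime) : Rough (N+1) = Rough N := by
  refine subset_antisymm (rough_mono (Nat.le_succ N)) fun n hn => ⟨hn.1, fun p hp hd => ?_⟩
  have := hn.2 p hp hd
  rcases (Nat.succ_le_of_lt this).lt_or_eq with h1 | h1
  · exact h1
  · subst h1; exact absurd hp h

lemma rough_mul {N a b : ℕ} (ha : a ∈ Rough N) (hb : b ∈ Rough N) : a * b ∈ Rough N :=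
  ⟨Nat.mul_pos ha.1 hb.1, fun p hp hd => (hp.dvd_mul.1 hd).elim (ha.2 p hp) (hb.2 p hp)⟩

lemma rough_prime_pow {N p : ℕ} (hp : p.Prime) (h : N < p) (k : ℕ) : p ^ k ∈ Rough N :=
  ⟨pow_pos hp.pos k, fun q hq hd => by
    rw [(Nat.prime_dvd_prime_iff_eq hq hp).1 (hq.dvd_of_dvd_pow hd)]; exact h⟩

lemma rough_split {N n : ℕ} (hp : (N+1).Prime) (hn : n ∈ Rough N) :
    ∃ k n', n' ∈ Rough (N+1) ∧ n = (N+1)^k * n' := by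
  obtain ⟨k, n', hd, rfl⟩ := Nat.exists_eq_pow_mul_and_not_dvd hn.1.ne' (N+1) hp.ne_one
  refine ⟨k, n', ⟨Nat.pos_of_mul_pos_left hn.1, fun p hpp hpd => ?_⟩, rfl⟩
  have h1 := hn.2 p hpp (hpd.mul_left _)
  rcases (Nat.succ_le_of_lt h1).lt_or_eq with h2 | h2
  · exact h2
  · subst h2; exact absurd hpd hd

/-- prime factors at most `N`. -/
def Smo (N : ℕ) : Set ℕ := {n | 0 < n ∧ ∀ p, p.Prime → p ∣ n → p ≤ N}

lemma smo_one (N : ℕ) : 1 ∈ Smo N :=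
  ⟨one_pos, fun p hp h => absurd (Nat.dvd_one.1 h) hp.ne_one⟩

lemma smo_rough_coprime {N a b : ℕ} (ha : a ∈ Smo N) (hb : b ∈ Rough N) : a.Coprime b := by
  refine Nat.coprime_of_dvd fun p hp h1 h2 => ?_
  have := ha.2 p hp h1
  have := hb.2 p hp h2
  omega

lemma sig_smo_rough (g : ℕ →* ℂ) {N a b : ℕ} (ha : a ∈ Smo N) (hb : b ∈ Rough N) :
    sig g (a * b) = sig g a * sig g b := sig_mul g (smo_rough_coprime ha hb)

lemma smo_mul_pow {N a : ℕ} (hp : (N+1).Prime) (ha : a ∈ Smo N) (k : ℕ) :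
    a * (N+1)^k ∈ Smo (N+1) :=
  ⟨Nat.mul_pos ha.1 (pow_pos hp.pos k), fun p hpp hd => by
    rcases hpp.dvd_mul.1 hd with h | h
    · exact (ha.2 p hpp h).trans (Nat.le_succ N)
    · exact Nat.le_of_dvd hp.pos (hpp.dvd_of_dvd_pow h)⟩

lemma smo_mono {M N : ℕ} (h : M ≤ N) : Smo M ⊆ Smo N :=
  fun _ hn => ⟨hn.1, fun p hp hd => (hn.2 p hp hd).trans h⟩

lemma smo_rough_split (N : ℕ) {n : ℕ} (hn : 0 < n) : ∃ a ∈ Smo N, ∃ b ∈ Rough N, n = a * b := by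
  induction N with
  | zero => exact ⟨1, smo_one 0, n, by rw [rough_zero]; exact hn, by simp⟩
  | succ N ih =>
    obtain ⟨a, ha, b, hb, rfl⟩ := ih
    by_cases hp : (N+1).Prime
    · obtain ⟨k, n', hn', rfl⟩ := rough_split hp hb
      exact ⟨a * (N+1)^k, smo_mul_pow hp ha k, n', hn', by ring⟩
    · exact ⟨a, smo_mono (Nat.le_succ N) ha, b, by rwa [rough_succ_of_not_prime hp], rfl⟩

lemma sig_prod_primes (g : ℕ →* ℂ) (F : Finset ℕ) (hF : ∀ q ∈ F, q.Prime) :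
    sig g (∏ q ∈ F, q) = ∏ q ∈ F, (1 + g q) := by
  classical
  induction F using Finset.induction_on with
  | empty => simp [sig_one]
  | insert q F hq ih =>
    rw [Finset.prod_insert hq, Finset.prod_insert hq, sig_mul, sig_prime g (hF q (by simp)), ih]
    · intro p hp; exact hF p (by simp [hp])
    · refine Nat.Coprime.prod_right fun p hp => ?_
      refine (Nat.coprime_primes (hF q (by simp)) (hF p (by simp [hp]))).2 ?_
      rintro rfl; exact hq hp

lemma rough_prod_primes {N : ℕ} (F : Finset ℕ) (hF : ∀ q ∈ F, q.Prime ∧ N < q) :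
    ∏ q ∈ F, q ∈ Rough N :=
  ⟨Finset.prod_pos fun q hq => (hF q hq).1.pos, fun p hp hd => by
    obtain ⟨q, hq, hpq⟩ := (Prime.dvd_finsetProd_iff hp.prime _).1 hd
    rw [(Nat.prime_dvd_prime_iff_eq hp (hF q hq).1).1 hpq]
    exact (hF q hq).2⟩

lemma exp_mem_TT (g : ℕ →* ℂ) (N : ℕ) (S : Set ℕ) (hS : ∀ q ∈ S, q.Prime ∧ N < q ∧ ‖g q‖ < 1) (L : ℂ)
    (hL : HasSum (S.indicator fun q => Complex.log (1 + g q)) L) : Complex.exp L ∈ TT g N := by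
  classical
  have h1 := (Complex.continuous_exp.tendsto L).comp hL.tendsto_sum_nat
  refine mem_closure_of_tendsto h1 (Filter.Eventually.of_forall fun X => ?_)
  refine ⟨∏ q ∈ (Finset.range X).filter (· ∈ S), q, rough_prod_primes _ fun q hq => ?_, ?_⟩
  · have := hS q (Finset.mem_filter.1 hq).2
    exact ⟨this.1, this.2.1⟩
  · rw [sig_prod_primes g _ fun q hq => (hS q (Finset.mem_filter.1 hq).2).1]
    simp only [Function.comp, Set.indicator_apply]
    rw [← Finset.sum_filter, Complex.exp_sum]
    refine Finset.prod_congr rfl fun q hq => ?_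
    rw [Complex.exp_log]
    intro h0
    have h2 := (hS q (Finset.mem_filter.1 hq).2).2.2
    have h3 : g q = -1 := by linear_combination h0
    rw [h3] at h2
    simp at h2

structure GG (g : ℕ →* ℂ) (r : ℝ) : Prop where
  hr : 1 < r
  bd : ∀ n, ‖g n‖ ≤ (n:ℝ)^(-r)
  A1 : ∃ A, Rich A r ∧ ∀ q ∈ A, q.Prime → g q = (((q:ℝ)^(-r) : ℝ) : ℂ)
  A2 : (∀ n, (g n).im = 0) ∨ ∃ ζ : ℂ, ‖ζ‖ ≤ 1 ∧ 0 < ζ.im ∧ ∃ A, Rich A r ∧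
    ∀ q ∈ A, q.Prime → g q = ζ * (((q:ℝ)^(-r) : ℝ) : ℂ)

lemma rpow_small (r : ℝ) (hr : 1 < r) (ε : ℝ) (hε : 0 < ε) : ∃ N₁ : ℕ, 1 ≤ N₁ ∧ ∀ q, N₁ ≤ q → (q:ℝ)^(-r) ≤ ε := by
  have h := (tendsto_rpow_neg_atTop (show 0 < r by linarith)).comp tendsto_natCast_atTop_atTop
  have h2 := h.eventually (ge_mem_nhds hε)
  obtain ⟨N, hN⟩ := Filter.eventually_atTop.1 h2
  exact ⟨max N 1, le_max_right _ _, fun q hq => hN q ((le_max_left _ _).trans hq)⟩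

lemma real_part (g : ℕ →* ℂ) (r : ℝ) (hr : 1 < r) (A : Set ℕ) (hA : Rich A r)
    (hg : ∀ q ∈ A, q.Prime → g q = (((q:ℝ)^(-r) : ℝ) : ℂ)) (D : ℝ) :
    ∃ N₀ : ℕ, ∀ N, N₀ ≤ N → ∀ τ : ℝ, |τ| ≤ D * (N:ℝ)^(-r) → ∃ (S₁ S₂ : Set ℕ) (L₁ L₂ : ℂ),
      (∀ q ∈ S₁, q.Prime ∧ q ∈ A ∧ N < q) ∧ (∀ q ∈ S₂, q.Prime ∧ q ∈ A ∧ N < q) ∧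
      HasSum (S₁.indicator fun q => Complex.log (1 + g q)) L₁ ∧
      HasSum (S₂.indicator fun q => Complex.log (1 + g q)) L₂ ∧ L₁ - L₂ = τ := by
  obtain ⟨N₀, h⟩ := kakeya_rich A r hr hA (fun q => Real.log (1 + (q:ℝ)^(-r))) (1/2) 1 (by norm_num) 1
    (by
      intro q hq _ _
      have h0 : 0 ≤ (q:ℝ)^(-r) := by positivity
      have h1 : (q:ℝ)^(-r) ≤ 1 := Real.rpow_le_one_of_one_le_of_nonpos (by exact_mod_cast hq.one_le) (by linarith)
      constructor
      · refine le_trans ?_ (Real.le_log_one_add_of_nonneg h0)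
        rw [le_div_iff₀ (by linarith)]
        nlinarith
      · have := Real.log_le_sub_one_of_pos (show 0 < 1 + (q:ℝ)^(-r) by linarith)
        linarith) D
  refine ⟨N₀, fun N hN τ hτ => ?_⟩
  obtain ⟨S₁, S₂, p₁, p₂, hS₁, hS₂, hp₁, hp₂, -, -, hx, -⟩ := h N hN τ hτ
  have key : ∀ (S : Set ℕ) (p : ℝ), (∀ q ∈ S, q.Prime ∧ q ∈ A ∧ N < q) →
      HasSum (S.indicator fun q => Real.log (1 + (q:ℝ)^(-r))) p →
      HasSum (S.indicator fun q => Complex.log (1 + g q)) (p:ℂ) := by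
    intro S p hS hp
    have : HasSum _ (p:ℂ) := Complex.ofRealCLM.hasSum hp
    convert this using 1
    ext q
    by_cases hq : q ∈ S
    · simp only [Set.indicator_of_mem hq]
      rw [hg q (hS q hq).2.1 (hS q hq).1]
      have h0 : 0 ≤ (q:ℝ)^(-r) := by positivity
      simp only [Complex.ofRealCLM_apply]
      rw [Complex.ofReal_log (by linarith)]
      push_cast; rfl
    · simp [Set.indicator_of_notMem hq]
  exact ⟨S₁, S₂, p₁, p₂, hS₁, hS₂, key _ _ hS₁ hp₁, key _ _ hS₂ hp₂, by rw [← hx]; push_cast; rfl⟩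

lemma log_est (z : ℂ) (hz : ‖z‖ ≤ 1/2) : ‖Complex.log (1+z) - z‖ ≤ ‖z‖^2 := by
  have h := Complex.norm_log_one_add_sub_self_le (z := z) (by linarith)
  refine h.trans ?_
  have : (1 - ‖z‖)⁻¹ ≤ 2 := by
    rw [inv_le_comm₀ (by linarith) (by norm_num)]; linarith
  nlinarith [sq_nonneg ‖z‖]

lemma im_part (g : ℕ →* ℂ) (r : ℝ) (hr : 1 < r) (A : Set ℕ) (hA : Rich A r) (ζ : ℂ) (hζ : ‖ζ‖ ≤ 1)
    (hζi : 0 < ζ.im)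
    (hg : ∀ q ∈ A, q.Prime → g q = ζ * (((q:ℝ)^(-r) : ℝ) : ℂ)) (D : ℝ) :
    ∃ N₀ : ℕ, ∀ N, N₀ ≤ N → ∀ x : ℝ, |x| ≤ D * (N:ℝ)^(-r) → ∃ (S₁ S₂ : Set ℕ) (L₁ L₂ : ℂ),
      (∀ q ∈ S₁, q.Prime ∧ q ∈ A ∧ N < q) ∧ (∀ q ∈ S₂, q.Prime ∧ q ∈ A ∧ N < q) ∧
      HasSum (S₁.indicator fun q => Complex.log (1 + g q)) L₁ ∧
      HasSum (S₂.indicator fun q => Complex.log (1 + g q)) L₂ ∧ (L₁ - L₂).im = x ∧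
      ‖L₁ - L₂‖ ≤ (4 / ζ.im) * |x| := by
  obtain ⟨N₁, hN₁, hsm⟩ := rpow_small r hr (min (1/2) (ζ.im/2)) (by positivity)
  have est : ∀ q, q.Prime → q ∈ A → N₁ ≤ q →
      ζ.im/2 * (q:ℝ)^(-r) ≤ (Complex.log (1 + g q)).im ∧ (Complex.log (1 + g q)).im ≤ 2 * (q:ℝ)^(-r) ∧
      ‖Complex.log (1 + g q)‖ ≤ 2 * (q:ℝ)^(-r) := by
    intro q hq hqA hqN
    have hs := hsm q hqN
    have h0 : 0 ≤ (q:ℝ)^(-r) := by positivity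
    have hs1 := hs.trans (min_le_left _ _)
    have hs2 := hs.trans (min_le_right _ _)
    have hn : ‖g q‖ ≤ (q:ℝ)^(-r) := by
      rw [hg q hqA hq, norm_mul, Complex.norm_real, Real.norm_of_nonneg h0]
      nlinarith
    have hl := log_est (g q) (hn.trans hs1)
    have him : (g q).im = ζ.im * (q:ℝ)^(-r) := by rw [hg q hqA hq]; simp
    have habs := (Complex.abs_im_le_norm _).trans hl
    have hsq : ‖g q‖^2 ≤ ((q:ℝ)^(-r))^2 := by gcongr
    rw [Complex.sub_im, him] at habs
    have h1 := abs_le.1 habs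
    have h2 : ‖Complex.log (1 + g q)‖ ≤ 2 * (q:ℝ)^(-r) := by
      have := norm_sub_norm_le (Complex.log (1 + g q)) (g q)
      nlinarith
    refine ⟨?_, (le_abs_self _).trans ((Complex.abs_im_le_norm _).trans h2), h2⟩
    nlinarith [h1.1]
  obtain ⟨N₀, h⟩ := kakeya_rich A r hr hA (fun q => (Complex.log (1 + g q)).im) (ζ.im/2) 2 (by positivity) N₁
    (fun q h1 h2 h3 => ⟨(est q h1 h2 h3).1, (est q h1 h2 h3).2.1⟩) D
  refine ⟨max N₀ N₁, fun N hN x hx => ?_⟩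
  obtain ⟨S₁, S₂, p₁, p₂, hS₁, hS₂, hp₁, hp₂, h01, h02, hd, hsum⟩ := h N ((le_max_left _ _).trans hN) x hx
  have key : ∀ (S : Set ℕ) (p : ℝ), (∀ q ∈ S, q.Prime ∧ q ∈ A ∧ N < q) →
      HasSum (S.indicator fun q => (Complex.log (1 + g q)).im) p →
      ∃ L : ℂ, HasSum (S.indicator fun q => Complex.log (1 + g q)) L ∧ L.im = p ∧ ‖L‖ ≤ (4 / ζ.im) * p := by
    intro S p hS hp
    have hb : ∀ q, ‖S.indicator (fun q => Complex.log (1 + g q)) q‖ ≤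
        (4 / ζ.im) * S.indicator (fun q => (Complex.log (1 + g q)).im) q := by
      intro q
      by_cases hq : q ∈ S
      · simp only [Set.indicator_of_mem hq]
        obtain ⟨e1, e2, e3⟩ := est q (hS q hq).1 (hS q hq).2.1
          ((le_max_right _ _).trans (hN.trans (hS q hq).2.2.le))
        refine e3.trans ?_
        rw [div_mul_eq_mul_div, le_div_iff₀ hζi]
        nlinarith
      · simp [Set.indicator_of_notMem hq]
    have hp4 := hp.mul_left (4 / ζ.im)
    have hsm := Summable.of_norm_bounded hp4.summable hb
    refine ⟨_, hsm.hasSum, ?_, tsum_of_norm_bounded hp4 hb⟩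
    refine HasSum.unique (Complex.imCLM.hasSum hsm.hasSum) ?_
    convert hp using 1
    ext q
    by_cases hq : q ∈ S
    · simp [Set.indicator_of_mem hq]
    · simp [Set.indicator_of_notMem hq]
  obtain ⟨L₁, a1, a2, a3⟩ := key S₁ p₁ hS₁ hp₁
  obtain ⟨L₂, b1, b2, b3⟩ := key S₂ p₂ hS₂ hp₂
  refine ⟨S₁, S₂, L₁, L₂, hS₁, hS₂, a1, b1, by rw [Complex.sub_im, a2, b2, hd], ?_⟩
  rw [← hsum, mul_add]
  exact (norm_sub_le _ _).trans (add_le_add a3 b3)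

lemma HH (g : ℕ →* ℂ) (r : ℝ) (hG : GG g r) : ∃ N₀ : ℕ, ∀ N, N₀ ≤ N → ∀ w : ℂ,
    ‖w‖ ≤ 4 * (N:ℝ)^(-r) → ((∀ n, (g n).im = 0) → w.im = 0) →
    ∃ t ∈ TT g N, ∃ t' ∈ TT g N, t = (1 + w) * t' := by
  have hr := hG.hr
  obtain ⟨A₁, hA₁, hg₁⟩ := hG.A1
  obtain ⟨N₁, hN₁, hsm⟩ := rpow_small r hr (1/8) (by norm_num)
  have lt1 : ∀ N q : ℕ, N₁ ≤ N → N < q → ‖g q‖ < 1 := fun N q h1 h2 => by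
    have := hsm q (h1.trans h2.le)
    have := hG.bd q
    linarith
  have wlog : ∀ N w, N₁ ≤ N → ‖w‖ ≤ 4 * (N:ℝ)^(-r) → 1 + w ≠ 0 ∧ ‖Complex.log (1+w)‖ ≤ 6 * (N:ℝ)^(-r) := by
    intro N w hN hw
    have h1 := hsm N hN
    have h2 := Complex.norm_log_one_add_half_le_self (z := w) (by linarith)
    refine ⟨fun h => ?_, by linarith⟩
    have : w = -1 := by linear_combination h
    rw [this] at hw
    simp at hw
    linarith
  rcases hG.A2 with hre | ⟨ζ, hζ, hζi, A₂, hA₂, hg₂⟩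
  · obtain ⟨N₀, h⟩ := real_part g r hr A₁ hA₁ hg₁ 6
    refine ⟨max N₀ N₁, fun N hN w hw hwr => ?_⟩
    have hN1 : N₁ ≤ N := (le_max_right _ _).trans hN
    obtain ⟨hw0, hl⟩ := wlog N w hN1 hw
    have hwim := hwr hre
    have hwn : |w.re| ≤ 1/2 := by
      have := hsm N hN1
      have := Complex.abs_re_le_norm w
      linarith
    have hlim : (Complex.log (1+w)).im = 0 := by
      rw [Complex.log_im]
      have : (1 + w) = ((1 + w.re : ℝ) : ℂ) := by apply Complex.ext <;> simp [hwim]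
      rw [this, Complex.arg_ofReal_of_nonneg]
      linarith [(abs_le.1 hwn).1]
    obtain ⟨S₁, S₂, L₁, L₂, hS₁, hS₂, h1, h2, h3⟩ := h N ((le_max_left _ _).trans hN) (Complex.log (1+w)).re
      ((Complex.abs_re_le_norm _).trans hl)
    refine ⟨_, exp_mem_TT g N S₁ (fun q hq => ⟨(hS₁ q hq).1, (hS₁ q hq).2.2, lt1 N q hN1 (hS₁ q hq).2.2⟩) L₁ h1,
      _, exp_mem_TT g N S₂ (fun q hq => ⟨(hS₂ q hq).1, (hS₂ q hq).2.2, lt1 N q hN1 (hS₂ q hq).2.2⟩) L₂ h2, ?_⟩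
    have : L₁ = Complex.log (1+w) + L₂ := by
      have : ((Complex.log (1+w)).re : ℂ) = Complex.log (1+w) := by
        apply Complex.ext <;> simp [hlim]
      rw [← this, ← h3]; ring
    rw [this, Complex.exp_add, Complex.exp_log hw0]
  · obtain ⟨N₂, h2⟩ := im_part g r hr A₂ hA₂ ζ hζ hζi hg₂ 6
    obtain ⟨N₀, h⟩ := real_part g r hr A₁ hA₁ hg₁ (6 + (4/ζ.im) * 6)
    refine ⟨max N₀ (max N₁ N₂), fun N hN w hw _ => ?_⟩
    have hN0 : N₀ ≤ N := (le_max_left _ _).trans hN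
    have hN1 : N₁ ≤ N := (le_max_left _ _).trans ((le_max_right _ _).trans hN)
    have hN2 : N₂ ≤ N := (le_max_right _ _).trans ((le_max_right _ _).trans hN)
    obtain ⟨hw0, hl⟩ := wlog N w hN1 hw
    have himl := (Complex.abs_im_le_norm _).trans hl
    obtain ⟨S₁, S₂, L₁, L₂, hS₁, hS₂, a1, a2, a3, a4⟩ := h2 N hN2 (Complex.log (1+w)).im himl
    obtain ⟨T₁, T₂, K₁, K₂, hT₁, hT₂, b1, b2, b3⟩ := h N hN0 (Complex.log (1+w) - (L₁ - L₂)).re (by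
      refine (Complex.abs_re_le_norm _).trans ((norm_sub_le _ _).trans ?_)
      have : (4/ζ.im) * |(Complex.log (1+w)).im| ≤ (4/ζ.im) * (6 * (N:ℝ)^(-r)) := by gcongr
      linarith)
    have hdisj : ∀ S T : Set ℕ, (∀ q ∈ S, q.Prime ∧ q ∈ A₂ ∧ N < q) → (∀ q ∈ T, q.Prime ∧ q ∈ A₁ ∧ N < q) →
        Disjoint S T := by
      intro S T hS hT
      rw [Set.disjoint_left]
      intro q hq hq'
      have e1 := hg₂ q (hS q hq).2.1 (hS q hq).1
      have e2 := hg₁ q (hT q hq').2.1 (hS q hq).1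
      have e3 : (g q).im = 0 := by rw [e2]; simp
      rw [e1] at e3
      have : 0 < (q:ℝ)^(-r) := Real.rpow_pos_of_pos (by exact_mod_cast (hS q hq).1.pos) _
      simp at e3
      rcases e3 with e3 | e3 <;> linarith
    have comb : ∀ S T : Set ℕ, (∀ q ∈ S, q.Prime ∧ q ∈ A₂ ∧ N < q) → (∀ q ∈ T, q.Prime ∧ q ∈ A₁ ∧ N < q) →
       ∀ L K : ℂ, HasSum (S.indicator fun q => Complex.log (1 + g q)) L →
       HasSum (T.indicator fun q => Complex.log (1 + g q)) K → Complex.exp (L + K) ∈ TT g N := by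
      intro S T hS hT L K hL hK
      refine exp_mem_TT g N (S ∪ T) ?_ _ ?_
      · rintro q (hq | hq)
        · exact ⟨(hS q hq).1, (hS q hq).2.2, lt1 N q hN1 (hS q hq).2.2⟩
        · exact ⟨(hT q hq).1, (hT q hq).2.2, lt1 N q hN1 (hT q hq).2.2⟩
      · rw [Set.indicator_union_of_disjoint (hdisj S T hS hT)]
        exact hL.add hK
    refine ⟨_, comb S₁ T₁ hS₁ hT₁ L₁ K₁ a1 b1, _, comb S₂ T₂ hS₂ hT₂ L₂ K₂ a2 b2, ?_⟩
    have : L₁ + K₁ = Complex.log (1+w) + (L₂ + K₂) := by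
      have : ((Complex.log (1+w) - (L₁ - L₂)).re : ℂ) = Complex.log (1+w) - (L₁ - L₂) := by
        apply Complex.ext
        · simp
        · rw [Complex.sub_im, a3]; simp
      rw [this] at b3
      linear_combination b3
    rw [this, Complex.exp_add, Complex.exp_log hw0]

lemma GG.summ {g : ℕ →* ℂ} {r : ℝ} (hG : GG g r) : Summable fun n : ℕ => (n:ℝ)^(-r) :=
  Real.summable_nat_rpow.2 (by linarith [hG.hr])

lemma sig_bound {g : ℕ →* ℂ} {r : ℝ} (hG : GG g r) : ∃ B : ℝ, 0 < B ∧ ∀ n, ‖sig g n‖ ≤ B := by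
  refine ⟨1 + ∑' n : ℕ, (n:ℝ)^(-r), ?_, fun n => ?_⟩
  · have : 0 ≤ ∑' n : ℕ, (n:ℝ)^(-r) := tsum_nonneg fun n => by positivity
    linarith
  · have h1 : ‖sig g n‖ ≤ ∑ d ∈ n.divisors, (d:ℝ)^(-r) :=
      (norm_sum_le _ _).trans (Finset.sum_le_sum fun d _ => hG.bd d)
    have h2 := hG.summ.sum_le_tsum n.divisors fun d _ => by positivity
    linarith

lemma sig_near {g : ℕ →* ℂ} {r : ℝ} (hG : GG g r) (ε : ℝ) (hε : 0 < ε) :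
    ∃ M₀ : ℕ, ∀ M, M₀ ≤ M → ∀ n ∈ Rough M, ‖sig g n - 1‖ ≤ ε := by
  obtain ⟨s, hs⟩ := summable_iff_vanishing_norm.1 hG.summ ε hε
  refine ⟨s.sup id, fun M hM n hn => ?_⟩
  have h1 : sig g n - 1 = ∑ d ∈ n.divisors.erase 1, g d := by
    unfold sig
    rw [← Finset.add_sum_erase _ _ (Nat.one_mem_divisors.2 hn.1.ne')]
    simp
  rw [h1]
  refine (norm_sum_le _ _).trans ((Finset.sum_le_sum fun d _ => hG.bd d).trans ?_)
  refine (le_abs_self _).trans (hs _ ?_).le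
  rw [Finset.disjoint_left]
  intro d hd hds
  simp only [Finset.mem_erase, Nat.mem_divisors] at hd
  have h2 : d ≤ s.sup id := Finset.le_sup (f := id) hds
  have h3 := hn.2 d.minFac (Nat.minFac_prime hd.1) ((Nat.minFac_dvd d).trans hd.2.1)
  have h4 := Nat.minFac_le (Nat.pos_of_dvd_of_pos hd.2.1 hn.1)
  omega

lemma half_of_prime {g : ℕ →* ℂ} {r : ℝ} (hG : GG g r) {q : ℕ} (hq : q.Prime) : ‖g q‖ ≤ 1/2 := by
  refine (hG.bd q).trans ?_
  have h2 : (2:ℝ) ≤ q := by exact_mod_cast hq.two_le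
  rw [Real.rpow_neg (by positivity), one_div]
  refine inv_anti₀ (by norm_num) ?_
  calc (2:ℝ) ≤ q := h2
    _ = (q:ℝ)^(1:ℝ) := by simp
    _ ≤ _ := Real.rpow_le_rpow_of_exponent_le (by linarith) hG.hr.le

lemma im_zero_sig {g : ℕ →* ℂ} (h : ∀ n, (g n).im = 0) (n : ℕ) : (sig g n).im = 0 := by
  unfold sig
  rw [Complex.im_sum]
  exact Finset.sum_eq_zero fun d _ => h d

lemma ratio {g : ℕ →* ℂ} {r : ℝ} (hG : GG g r) {q : ℕ} (hq : q.Prime) (a : ℕ) :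
    ∃ w : ℂ, sig g (q^(a+1)) = (1 + w) * sig g (q^a) ∧ ‖w‖ ≤ 3 * ‖g q‖^(a+1) ∧
      ((∀ n, (g n).im = 0) → w.im = 0) := by
  have hz := half_of_prime hG hq
  set z := g q with hzdef
  have h1 : sig g (q^a) * (1 - z) = 1 - z^(a+1) := by
    rw [sig_prime_pow g hq, geom_sum_mul_neg]
  have h2 : ‖1 - z‖ ≤ 3/2 := (norm_sub_le _ _).trans (by rw [norm_one]; linarith)
  have h3 : 1/2 ≤ ‖1 - z^(a+1)‖ := by
    have := norm_sub_norm_le (1:ℂ) (z^(a+1))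
    rw [norm_one, norm_pow] at this
    have h4 : ‖z‖^(a+1) ≤ 1/2 := by
      calc ‖z‖^(a+1) ≤ ‖z‖^1 := pow_le_pow_of_le_one (norm_nonneg _) (by linarith) (by omega)
        _ ≤ 1/2 := by simpa using hz
    linarith
  have h5 : 1/3 ≤ ‖sig g (q^a)‖ := by
    rw [← h1, norm_mul] at h3
    nlinarith [norm_nonneg (sig g (q^a))]
  have h6 : sig g (q^a) ≠ 0 := by
    rw [← norm_pos_iff]; linarith
  refine ⟨z^(a+1) / sig g (q^a), ?_, ?_, ?_⟩
  · rw [add_mul, div_mul_cancel₀ _ h6, sig_prime_pow g hq, sig_prime_pow g hq, Finset.sum_range_succ _ (a+1)]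
    ring
  · rw [norm_div, norm_pow, div_le_iff₀ (by linarith)]
    have : 0 ≤ ‖z‖^(a+1) := by positivity
    nlinarith
  · intro h
    have e1 := im_zero_sig h (q^a)
    have e2 : (z^(a+1)).im = 0 := by rw [hzdef, ← map_pow]; exact h _
    rw [Complex.div_im, e1, e2]; simp

lemma rough_smo_succ {M n' : ℕ} (hq : (M+1).Prime) {n : ℕ} (h : n' ∈ Smo M) (hn : n = (M+1)) (k : ℕ) :
    n'.Coprime (n^k) := by
  subst hn
  exact smo_rough_coprime h (rough_prime_pow hq (Nat.lt_succ_self M) k)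

lemma TT_compact {g : ℕ →* ℂ} {r : ℝ} (hG : GG g r) (N : ℕ) : IsCompact (TT g N) := by
  obtain ⟨B, _, hB⟩ := sig_bound hG
  refine Bornology.IsBounded.isCompact_closure ?_
  refine (Metric.isBounded_closedBall (x := (0:ℂ)) (r := B)).subset ?_
  rintro _ ⟨n, _, rfl⟩
  simpa using hB n

lemma TT_approx {g : ℕ →* ℂ} {N : ℕ} {t : ℂ} (ht : t ∈ TT g N) (η : ℝ) (hη : 0 < η) :
    ∃ n ∈ Rough N, ‖t - sig g n‖ < η := by
  obtain ⟨_, ⟨n, hn, rfl⟩, h⟩ := Metric.mem_closure_iff.1 ht η hη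
  exact ⟨n, hn, by rwa [← dist_eq_norm]⟩

lemma TT_color {g : ℕ →* ℂ} {r : ℝ} (hG : GG g r) (N₀ : ℕ)
    (hH : ∀ N, N₀ ≤ N → ∀ w : ℂ,
    ‖w‖ ≤ 4 * (N:ℝ)^(-r) → ((∀ n, (g n).im = 0) → w.im = 0) →
    ∃ t ∈ TT g N, ∃ t' ∈ TT g N, t = (1 + w) * t') (N : ℕ) (hN : N₀ ≤ N) (P : ℂ → Prop) (δ : ℝ)
    (hδ : 0 < δ) (hP : ∀ a ∈ Rough N, ∀ b ∈ Rough N, ‖sig g a - sig g b‖ < δ → (P (sig g a) ↔ P (sig g b))) :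
    ∀ n ∈ Rough N, (P (sig g n) ↔ P (sig g 1)) := by
  obtain ⟨B, hB0, hB⟩ := sig_bound hG
  obtain ⟨M₀, hM₀⟩ := sig_near hG (δ / (4 * B)) (by positivity)
  have base : ∀ M, M₀ ≤ M → N ≤ M → ∀ n ∈ Smo M, n ∈ Rough N → ∀ n' ∈ Rough M,
      (P (sig g (n * n')) ↔ P (sig g n)) := by
    intro M hM hNM n hn hn2 n' hn'
    refine hP _ (rough_mul hn2 (rough_mono hNM hn')) _ hn2 ?_
    rw [sig_smo_rough g hn hn', show sig g n * sig g n' - sig g n = sig g n * (sig g n' - 1) by ring, norm_mul]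
    calc _ ≤ B * (δ / (4*B)) := mul_le_mul (hB n) (hM₀ M hM n' hn') (norm_nonneg _) hB0.le
      _ = δ / 4 := by field_simp
      _ < δ := by linarith
  have main : ∀ k M, M₀ ≤ M + k → N ≤ M → ∀ n ∈ Smo M, n ∈ Rough N → ∀ n' ∈ Rough M,
      (P (sig g (n * n')) ↔ P (sig g n)) := by
    intro k
    induction k with
    | zero => intro M hM; exact base M hM
    | succ k ih =>
      intro M hM hNM n hn hn2 n' hn'
      have ih' := ih (M+1) (by omega) (by omega)
      by_cases hq : (M+1).Prime
      · obtain ⟨a, n'', hn'', rfl⟩ := rough_split hq hn'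
        have hR : ∀ a, n * (M+1)^a ∈ Rough N := fun a =>
          rough_mul hn2 (rough_prime_pow hq (by omega) a)
        rw [← mul_assoc, ih' _ (smo_mul_pow hq hn a) (hR a) n'' hn'']
        have step : ∀ a, (P (sig g (n * (M+1)^(a+1))) ↔ P (sig g (n * (M+1)^a))) := by
          intro a
          obtain ⟨w, hw1, hw2, hw3⟩ := ratio hG hq a
          have hw4 : ‖w‖ ≤ 4 * ((M+1:ℕ):ℝ)^(-r) := by
            have hz := half_of_prime hG hq
            have h4 : ‖g (M+1)‖^(a+1) ≤ ‖g (M+1)‖^1 :=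
              pow_le_pow_of_le_one (norm_nonneg _) (by linarith) (by omega)
            have := hG.bd (M+1)
            rw [pow_one] at h4
            have := norm_nonneg (g (M+1))
            linarith
          obtain ⟨t, ht, t', ht', htt⟩ := hH (M+1) (by omega) w hw4 hw3
          obtain ⟨n1, hn1, h1⟩ := TT_approx ht (δ/(4*B)) (by positivity)
          obtain ⟨n2, hn2', h2⟩ := TT_approx ht' (δ/(4*B)) (by positivity)
          have s1 := smo_mul_pow hq hn (a+1)
          have s0 := smo_mul_pow hq hn a
          rw [← ih' _ s1 (hR _) n2 hn2', ← ih' _ s0 (hR _) n1 hn1]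
          have hle : N ≤ M + 1 := by omega
          refine hP _ (rough_mul (hR _) (rough_mono hle hn2')) _ (rough_mul (hR _) (rough_mono hle hn1)) ?_
          rw [sig_smo_rough g s1 hn2', sig_smo_rough g s0 hn1]
          have e1 : sig g (n * (M+1)^(a+1)) = (1 + w) * sig g (n * (M+1)^a) := by
            rw [sig_mul g (rough_smo_succ hq hn rfl _), sig_mul g (rough_smo_succ hq hn rfl _), hw1]; ring
          have e2 : sig g (n * (M+1)^(a+1)) * sig g n2 - sig g (n * (M+1)^a) * sig g n1 =
              sig g (n * (M+1)^a) * (t - sig g n1) - sig g (n * (M+1)^(a+1)) * (t' - sig g n2) := by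
            rw [htt, e1]; ring
          rw [e2]
          refine (norm_sub_le _ _).trans_lt ?_
          rw [norm_mul, norm_mul]
          have f1 := mul_le_mul (hB (n * (M+1)^a)) h1.le (norm_nonneg _) hB0.le
          have f2 := mul_le_mul (hB (n * (M+1)^(a+1))) h2.le (norm_nonneg _) hB0.le
          have f3 : B * (δ / (4*B)) = δ / 4 := by field_simp
          linarith
        induction a with
        | zero => simp
        | succ a iha =>
          rw [step a]
          exact iha (rough_mul (rough_prime_pow hq (Nat.lt_succ_self M) a) (rough_mono (Nat.le_succ M) hn''))
      · exact ih' n (smo_mono (Nat.le_succ M) hn) hn2 n' (by rwa [rough_succ_of_not_prime hq])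
  intro n hn
  have := main M₀ N (by omega) le_rfl 1 (smo_one N) (rough_one_mem N) n hn
  rwa [one_mul] at this

lemma TT_preconn {g : ℕ →* ℂ} {r : ℝ} (hG : GG g r) (N₀ : ℕ)
    (hH : ∀ N, N₀ ≤ N → ∀ w : ℂ,
    ‖w‖ ≤ 4 * (N:ℝ)^(-r) → ((∀ n, (g n).im = 0) → w.im = 0) →
    ∃ t ∈ TT g N, ∃ t' ∈ TT g N, t = (1 + w) * t') (N : ℕ) (hN : N₀ ≤ N) : IsPreconnected (TT g N) := by
  have hcl : IsClosed (TT g N) := isClosed_closure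
  rw [isPreconnected_iff_subset_of_fully_disjoint_closed hcl]
  intro u v hu hv huv hd
  have hc := (TT_compact hG N).inter_right hu
  obtain ⟨δ, hδ, h⟩ := Metric.exists_pos_forall_lt_edist hc hv (hd.mono_left Set.inter_subset_right)
  have hmem : ∀ a ∈ Rough N, sig g a ∈ TT g N := fun a ha => subset_closure ⟨a, ha, rfl⟩
  have hstep : ∀ a ∈ Rough N, ∀ b ∈ Rough N, ‖sig g a - sig g b‖ < δ → sig g a ∈ u → sig g b ∈ u := by
    intro a ha b hb hab hau
    rcases huv (hmem b hb) with h1 | h1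
    · exact h1
    · exfalso
      have := h _ ⟨hmem a ha, hau⟩ _ h1
      rw [edist_dist, dist_eq_norm] at this
      have h2 : ENNReal.ofReal ‖sig g a - sig g b‖ ≤ δ := by
        rw [← ENNReal.ofReal_coe_nnreal]
        exact ENNReal.ofReal_le_ofReal hab.le
      exact absurd this (not_lt.2 h2)
  have hcol := TT_color hG N₀ hH N hN (· ∈ u) δ (by exact_mod_cast hδ) (fun a ha b hb hab =>
    ⟨hstep a ha b hb hab, hstep b hb a ha (by rwa [norm_sub_rev])⟩)
  by_cases h1 : sig g 1 ∈ u
  · left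
    refine closure_minimal ?_ hu
    rintro _ ⟨n, hn, rfl⟩
    exact (hcol n hn).2 h1
  · right
    refine closure_minimal ?_ hv
    rintro _ ⟨n, hn, rfl⟩
    exact (huv (hmem n hn)).resolve_left fun h2 => h1 ((hcol n hn).1 h2)

lemma cc_eq {E S : Set ℂ} (hSE : S ⊆ E) (hS : IsPreconnected S) {a b : ℂ} (ha : a ∈ S) (hb : b ∈ S) :
    (ConnectedComponents.mk (⟨a, hSE ha⟩ : E)) = ConnectedComponents.mk (⟨b, hSE hb⟩ : E) := by
  have h1 : IsPreconnected (Subtype.val ⁻¹' S : Set E) := by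
    rw [← Topology.IsInducing.subtypeVal.isPreconnected_image, Subtype.image_preimage_coe,
      Set.inter_eq_right.2 hSE]
    exact hS
  refine ConnectedComponents.coe_eq_coe'.2 ?_
  exact h1.subset_connectedComponent (x := ⟨b, hSE hb⟩) hb
    (show (⟨a, hSE ha⟩ : E) ∈ Subtype.val ⁻¹' S from ha)

lemma smul_TT_sub (g : ℕ →* ℂ) {N n : ℕ} (hn : n ∈ Smo N) :
    (fun t => sig g n * t) '' TT g N ⊆ TT g 0 := by
  unfold TT
  refine (image_closure_subset_closure_image (by fun_prop)).trans (closure_mono ?_)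
  rintro _ ⟨_, ⟨b, hb, rfl⟩, rfl⟩
  refine ⟨n * b, ?_, sig_smo_rough g hn hb⟩
  rw [rough_zero]
  exact Nat.mul_pos hn.1 hb.1

lemma finite_cc {g : ℕ →* ℂ} {r : ℝ} (hG : GG g r) : Finite (ConnectedComponents (TT g 0)) := by
  obtain ⟨N₀, hH⟩ := HH g r hG
  set N := max N₀ 1 with hNdef
  have hN : N₀ ≤ N := le_max_left _ _
  have hN1 : 1 ≤ N := le_max_right _ _
  have hpc := TT_preconn hG N₀ hH N hN
  have hpos : ∀ n, 0 < n → sig g n ∈ TT g 0 := fun n hn => subset_closure ⟨n, by rw [rough_zero]; exact hn, rfl⟩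
  have hpcn : ∀ n, IsPreconnected ((fun t => sig g n * t) '' TT g N) := fun n =>
    hpc.image _ (by fun_prop)
  let c : ℕ → ConnectedComponents (TT g 0) := fun n =>
    if h : 0 < n then ConnectedComponents.mk ⟨sig g n, hpos n h⟩ else ConnectedComponents.mk ⟨sig g 1, hpos 1 one_pos⟩
  have hc : ∀ n (h : 0 < n), c n = ConnectedComponents.mk ⟨sig g n, hpos n h⟩ := fun n h => dif_pos h
  have hself : ∀ n, sig g n ∈ (fun t => sig g n * t) '' TT g N := fun n => ⟨1, one_mem_TT g N, by simp⟩
  have c1 : ∀ n ∈ Smo N, ∀ b ∈ Rough N, c (n * b) = c n := by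
    intro n hn b hb
    rw [hc _ (Nat.mul_pos hn.1 hb.1), hc _ hn.1]
    refine cc_eq (smul_TT_sub g hn) (hpcn n) (a := sig g (n*b)) ?_ (hself n)
    exact ⟨sig g b, subset_closure ⟨b, hb, rfl⟩, (sig_smo_rough g hn hb).symm⟩
  obtain ⟨a₀, ha₀⟩ := exists_pow_lt_of_lt_one (show 0 < (N:ℝ)^(-r) from Real.rpow_pos_of_pos (by exact_mod_cast hN1) _)
    (show (1/2:ℝ) < 1 by norm_num)
  have c2 : ∀ p u a, p.Prime → p ≤ N → u ∈ Smo N → p.Coprime u → a₀ ≤ a → c (p^(a+1) * u) = c (p^a * u) := by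
    intro p u a hp hpN hu hcop ha
    have hsm : ∀ a, p^a * u ∈ Smo N := fun a =>
      ⟨Nat.mul_pos (pow_pos hp.pos a) hu.1, fun q hq hd => by
        rcases hq.dvd_mul.1 hd with h | h
        · exact (Nat.le_of_dvd hp.pos (hq.dvd_of_dvd_pow h)).trans hpN
        · exact hu.2 q hq h⟩
    obtain ⟨w, hw1, hw2, hw3⟩ := ratio hG hp a
    have hw4 : ‖w‖ ≤ 4 * (N:ℝ)^(-r) := by
      have h1 : ‖g p‖^(a+1) ≤ (1/2)^(a+1) := by gcongr; exact half_of_prime hG hp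
      have h2 : (1/2:ℝ)^(a+1) ≤ (1/2)^a₀ := pow_le_pow_of_le_one (by norm_num) (by norm_num) (by omega)
      have : 0 ≤ (N:ℝ)^(-r) := by positivity
      linarith
    obtain ⟨t, ht, t', ht', htt⟩ := hH N hN w hw4 hw3
    rw [hc _ (hsm _).1, hc _ (hsm _).1]
    have e1 : sig g (p^(a+1) * u) * t' = sig g (p^a * u) * t := by
      rw [sig_mul g (hcop.pow_left _), sig_mul g (hcop.pow_left _), hw1, htt]; ring
    have f1 := cc_eq (smul_TT_sub g (hsm (a+1))) (hpcn _) (hself _) ⟨t', ht', rfl⟩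
    have f2 := cc_eq (smul_TT_sub g (hsm a)) (hpcn _) (hself _) ⟨t, ht, rfl⟩
    rw [f1, f2]
    congr 2
  set Q := (Nat.factorial N)^a₀ with hQ
  have hQ0 : Q ≠ 0 := pow_ne_zero _ (Nat.factorial_ne_zero N)
  have c3 : ∀ n, n ∈ Smo N → ∃ n' ∈ Q.divisors, c n = c n' := by
    intro n
    induction n using Nat.strong_induction_on with
    | _ n ih =>
      intro hn
      by_cases hd : n ∣ Q
      · exact ⟨n, Nat.mem_divisors.2 ⟨hd, hQ0⟩, rfl⟩
      · rw [← Nat.factorization_le_iff_dvd hn.1.ne' hQ0, Finsupp.le_def] at hd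
        push Not at hd
        obtain ⟨p, hp⟩ := hd
        have hpp : p.Prime := by
          by_contra hnp
          rw [Nat.factorization_eq_zero_of_not_prime n hnp] at hp
          omega
        have hpn : p ∣ n := Nat.dvd_of_factorization_pos (by omega)
        have hpN := hn.2 p hpp hpn
        have hf1 : 1 ≤ (Nat.factorial N).factorization p :=
          (hpp.dvd_iff_one_le_factorization (Nat.factorial_ne_zero N)).1 (hpp.dvd_factorial.2 hpN)
        rw [hQ, Nat.factorization_pow] at hp
        simp only [Finsupp.smul_apply, smul_eq_mul] at hp
        obtain ⟨k, u, hu, rfl⟩ := Nat.exists_eq_pow_mul_and_not_dvd hn.1.ne' p hpp.ne_one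
        have hu0 : 0 < u := Nat.pos_of_mul_pos_left hn.1
        have hk : (p^k * u).factorization p = k := by
          rw [Nat.factorization_mul (pow_ne_zero _ hpp.ne_zero) hu0.ne', Finsupp.add_apply,
            Nat.factorization_eq_zero_of_not_dvd hu, hpp.factorization_pow]
          simp
        rw [hk] at hp
        have hak : a₀ < k := by nlinarith
        obtain ⟨a, rfl⟩ : ∃ a, k = a + 1 := ⟨k - 1, by omega⟩
        have huS : u ∈ Smo N := ⟨hu0, fun q hq hd => hn.2 q hq (hd.mul_left _)⟩
        rw [c2 p u a hpp hpN huS ((hpp.coprime_iff_not_dvd).2 hu) (by omega)]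
        refine ih _ ?_ ⟨Nat.mul_pos (pow_pos hpp.pos a) hu0, fun q hq hd => hn.2 q hq ?_⟩
        · exact Nat.mul_lt_mul_of_pos_right (Nat.pow_lt_pow_right hpp.one_lt (Nat.lt_succ_self a)) hu0
        · exact hd.trans (Nat.mul_dvd_mul_right (pow_dvd_pow p (Nat.le_succ a)) u)
  have c4 : ∀ n, 0 < n → ∃ n' ∈ Q.divisors, c n = c n' := by
    intro n hn
    obtain ⟨a, ha, b, hb, rfl⟩ := smo_rough_split N hn
    rw [c1 a ha b hb]
    exact c3 a ha
  set W : Set (TT g 0) := ⋃ n' ∈ Q.divisors, (ConnectedComponents.mk) ⁻¹' {c n'} with hW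
  have hWc : IsClosed W := by
    refine Q.divisors.finite_toSet.isClosed_biUnion fun n' hn' => ?_
    have h0 : 0 < n' := Nat.pos_of_mem_divisors hn'
    have : (ConnectedComponents.mk : TT g 0 → _) ⁻¹' {c n'} = connectedComponent ⟨sig g n', hpos n' h0⟩ := by
      rw [hc n' h0]
      exact connectedComponents_preimage_singleton
    rw [this]
    exact isClosed_connectedComponent
  have hWu : ∀ x : TT g 0, x ∈ W := by
    intro ⟨x, hx⟩
    rw [← hWc.closure_eq, closure_subtype]
    refine closure_mono ?_ hx
    rintro _ ⟨n, hn, rfl⟩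
    obtain ⟨n', hn', h⟩ := c4 n hn.1
    refine ⟨⟨sig g n, hpos n hn.1⟩, ?_, rfl⟩
    rw [hW, Set.mem_iUnion₂]
    exact ⟨n', hn', by rw [Set.mem_preimage, ← hc n hn.1, h]; rfl⟩
  refine Set.finite_univ_iff.1 ((Q.divisors.finite_toSet.image c).subset ?_)
  intro y _
  obtain ⟨x, rfl⟩ := ConnectedComponents.surjective_coe y
  obtain ⟨n', hn', h⟩ := Set.mem_iUnion₂.1 (hWu x)
  exact ⟨n', hn', h.symm⟩

noncomputable def gchi {m : ℕ} (χ : DirichletCharacter ℂ m) (r : ℝ) : ℕ →* ℂ where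
  toFun d := χ ((d : ℕ) : ZMod m) * (((d : ℝ) ^ (-r) : ℝ) : ℂ)
  map_one' := by simp
  map_mul' a b := by
    rw [Nat.cast_mul, Nat.cast_mul, map_mul, Real.mul_rpow (by positivity) (by positivity)]
    push_cast; ring

lemma gchi_apply {m : ℕ} (χ : DirichletCharacter ℂ m) (r : ℝ) (d : ℕ) :
    gchi χ r d = χ ((d : ℕ) : ZMod m) * (((d : ℝ) ^ (-r) : ℝ) : ℂ) := rfl

lemma GG_gchi {m : ℕ} [NeZero m] (χ : DirichletCharacter ℂ m) (r : ℝ) (hr : 1 < r) : GG (gchi χ r) r := by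
  have hrich : ∀ a : ZMod m, IsUnit a → Rich {q : ℕ | (q : ZMod m) = a} r := by
    intro a ha C
    exact prime_ap a ha r hr C
  refine ⟨hr, fun n => ?_, ⟨_, hrich 1 isUnit_one, fun q hq _ => ?_⟩, ?_⟩
  · rw [gchi_apply, norm_mul, Complex.norm_real, Real.norm_of_nonneg (by positivity)]
    have h1 := χ.norm_le_one ((n : ℕ) : ZMod m)
    have h2 : 0 ≤ (n:ℝ)^(-r) := by positivity
    nlinarith
  · have : (q : ZMod m) = 1 := hq
    rw [gchi_apply, this]; simp
  · by_cases h : ∀ n, (gchi χ r n).im = 0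
    · exact Or.inl h
    · right
      push Not at h
      obtain ⟨n, hn⟩ := h
      have h1 : (χ (n : ZMod m)).im ≠ 0 := by
        intro h0
        apply hn
        rw [gchi_apply]
        simp [h0]
      have hu : IsUnit (n : ZMod m) := by
        by_contra hnu
        rw [χ.map_nonunit hnu] at h1
        simp at h1
      have hex : ∃ b : ZMod m, IsUnit b ∧ 0 < (χ b).im := by
        rcases lt_or_gt_of_ne h1 with h2 | h2
        · obtain ⟨u, hu⟩ := hu
          refine ⟨((u⁻¹ : (ZMod m)ˣ) : ZMod m), Units.isUnit _, ?_⟩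
          have h3 : χ ((u⁻¹ : (ZMod m)ˣ) : ZMod m) = (χ (u : ZMod m))⁻¹ := by
            refine eq_inv_of_mul_eq_one_left ?_
            rw [← map_mul]; simp
          rw [h3, Complex.inv_im, hu]
          refine div_pos (by linarith) (Complex.normSq_pos.2 ?_)
          intro h0; rw [h0] at h2; simp at h2
        · exact ⟨_, hu, h2⟩
      obtain ⟨b, hb, hb2⟩ := hex
      refine ⟨χ b, χ.norm_le_one b, hb2, _, hrich b hb, fun q hq _ => ?_⟩
      have : (q : ZMod m) = b := hq
      rw [gchi_apply, this]

lemma closure_eq_TT {m : ℕ} (χ : DirichletCharacter ℂ m) (r : ℝ) :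
    closure (sigmaQ χ r '' {k : ℕ | 0 < k}) = TT (gchi χ r) 0 := by
  unfold TT
  rw [rough_zero]
  rfl

lemma card_pos' {m : ℕ} (hm : 0 < m) (χ : DirichletCharacter ℂ m) (r : ℝ) (hr : 1 < r) :
    0 < Nat.card (ConnectedComponents ↥(closure (sigmaQ χ r '' {k : ℕ | 0 < k}))) := by
  have : NeZero m := ⟨hm.ne'⟩
  rw [closure_eq_TT]
  have := finite_cc (GG_gchi χ r hr)
  have : Nonempty (ConnectedComponents (TT (gchi χ r) 0)) := ⟨ConnectedComponents.mk ⟨1, one_mem_TT _ _⟩⟩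
  exact Nat.card_pos

lemma card_pieces (n : ℕ) (K : Fin n → Set ℂ) (E : Set ℂ) (hE : E = ⋃ i, K i) (hcl : ∀ i, IsClosed (K i))
    (hd : ∀ i j, i ≠ j → Disjoint (K i) (K j)) (hpc : ∀ i, IsPreconnected (K i)) (hne : ∀ i, (K i).Nonempty) :
    Nat.card (ConnectedComponents E) = n := by
  have hsub : ∀ i, K i ⊆ E := fun i => by rw [hE]; exact Set.subset_iUnion K i
  choose x hx using hne
  let φ : Fin n → ConnectedComponents E := fun i => ConnectedComponents.mk ⟨x i, hsub i (hx i)⟩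
  have hbij : Function.Bijective φ := by
    constructor
    · intro i j hij
      by_contra hne
      have h1 : IsClopen (Subtype.val ⁻¹' K j : Set E) := by
        refine ⟨(hcl j).preimage continuous_subtype_val, ?_⟩
        rw [← isClosed_compl_iff]
        have : (Subtype.val ⁻¹' K j : Set E)ᶜ = Subtype.val ⁻¹' (⋃ i ∈ {i | i ≠ j}, K i) := by
          ext ⟨y, hy⟩
          simp only [Set.mem_compl_iff, Set.mem_preimage, Set.mem_iUnion, Set.mem_ofPred_eq, exists_prop]
          constructor
          · intro h
            rw [hE] at hy
            obtain ⟨i, hi⟩ := Set.mem_iUnion.1 hy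
            exact ⟨i, fun e => h (e ▸ hi), hi⟩
          · rintro ⟨i, hi, hyi⟩ hyj
            exact Set.disjoint_left.1 (hd i j hi) hyi hyj
        rw [this]
        exact ((Set.toFinite _).isClosed_biUnion fun i _ => hcl i).preimage continuous_subtype_val
      have h2 := ConnectedComponents.coe_eq_coe'.1 hij
      have h3 := h1.connectedComponent_subset (x := (⟨x j, hsub j (hx j)⟩ : E)) (hx j) h2
      exact Set.disjoint_left.1 (hd i j hne) (hx i) h3
    · intro y
      obtain ⟨⟨z, hz⟩, rfl⟩ := ConnectedComponents.surjective_coe y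
      have hz' := hz
      rw [hE] at hz'
      obtain ⟨i, hi⟩ := Set.mem_iUnion.1 hz'
      exact ⟨i, cc_eq (hsub i) (hpc i) (hx i) hi⟩
  rw [← Nat.card_congr (Equiv.ofBijective φ hbij), Nat.card_fin]

noncomputable def g1 (r : ℝ) : ℕ →* ℂ := gchi (1 : DirichletCharacter ℂ 1) r

noncomputable def ss (r : ℝ) (n : ℕ) : ℝ := ∑ d ∈ n.divisors, (d:ℝ)^(-r)

noncomputable def ZZ (r : ℝ) (N : ℕ) : ℝ := sSup (ss r '' Rough N)

lemma g1_apply (r : ℝ) (n : ℕ) : g1 r n = (((n:ℝ)^(-r) : ℝ) : ℂ) := by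
  unfold g1
  rw [gchi_apply, MulChar.one_apply (isUnit_of_subsingleton _), one_mul]

lemma sig_g1 (r : ℝ) (n : ℕ) : sig (g1 r) n = (ss r n : ℂ) := by
  unfold sig ss
  rw [Complex.ofReal_sum]
  exact Finset.sum_congr rfl fun d _ => g1_apply r d

lemma GG_g1 (r : ℝ) (hr : 1 < r) : GG (g1 r) r := GG_gchi _ r hr

lemma ss_mul (r : ℝ) {a b : ℕ} (h : a.Coprime b) : ss r (a*b) = ss r a * ss r b := by
  have := sig_mul (g1 r) h
  rw [sig_g1, sig_g1, sig_g1] at this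
  exact_mod_cast this

lemma one_le_ss (r : ℝ) {n : ℕ} (hn : 0 < n) : 1 ≤ ss r n := by
  unfold ss
  have := Finset.single_le_sum (f := fun d : ℕ => (d:ℝ)^(-r)) (s := n.divisors) (fun d _ => by positivity)
    (Nat.one_mem_divisors.2 hn.ne')
  simpa using this

lemma ss_bdd (r : ℝ) (hr : 1 < r) (N : ℕ) : BddAbove (ss r '' Rough N) := by
  obtain ⟨B, hB0, hB⟩ := sig_bound (GG_g1 r hr)
  refine ⟨B, ?_⟩
  rintro _ ⟨n, hn, rfl⟩
  have := hB n
  rw [sig_g1, Complex.norm_real] at this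
  exact (le_abs_self _).trans this

lemma ss_le_ZZ (r : ℝ) (hr : 1 < r) {N n : ℕ} (hn : n ∈ Rough N) : ss r n ≤ ZZ r N :=
  le_csSup (ss_bdd r hr N) ⟨n, hn, rfl⟩

lemma TT_g1 (r : ℝ) (hr : 1 < r) {N : ℕ} {t : ℂ} (ht : t ∈ TT (g1 r) N) : t.im = 0 ∧ 1 ≤ t.re ∧ t.re ≤ ZZ r N := by
  have hcl : IsClosed {z : ℂ | z.im = 0 ∧ 1 ≤ z.re ∧ z.re ≤ ZZ r N} := by
    refine (isClosed_eq Complex.continuous_im continuous_const).inter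
      ((isClosed_le continuous_const Complex.continuous_re).inter
        (isClosed_le Complex.continuous_re continuous_const))
  refine closure_minimal ?_ hcl ht
  rintro _ ⟨n, hn, rfl⟩
  rw [sig_g1]
  exact ⟨by simp, by simpa using one_le_ss r hn.1, by simpa using ss_le_ZZ r hr hn⟩

lemma ZZ_mem (r : ℝ) (hr : 1 < r) (N : ℕ) : (ZZ r N : ℂ) ∈ TT (g1 r) N := by
  have h := csSup_mem_closure (s := ss r '' Rough N) ⟨_, 1, rough_one_mem N, rfl⟩ (ss_bdd r hr N)
  have h2 := image_closure_subset_closure_image Complex.continuous_ofReal (Set.mem_image_of_mem Complex.ofReal h)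
  refine closure_mono ?_ h2
  rintro _ ⟨_, ⟨n, hn, rfl⟩, rfl⟩
  exact ⟨n, hn, sig_g1 r n⟩

lemma ivt_TT (r : ℝ) (hr : 1 < r) {N : ℕ} (hpc : IsPreconnected (TT (g1 r) N)) (y : ℝ) (h1 : 1 ≤ y)
    (h2 : y ≤ ZZ r N) : (y : ℂ) ∈ TT (g1 r) N := by
  have h3 := (hpc.image Complex.re Complex.continuous_re.continuousOn).Icc_subset
    (Set.mem_image_of_mem _ (one_mem_TT _ N)) (Set.mem_image_of_mem _ (ZZ_mem r hr N))
  obtain ⟨t, ht, hty⟩ := h3 ⟨by simpa using h1, by simpa using h2⟩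
  have : t = (y:ℂ) := Complex.ext (by simpa using hty) (by simpa using (TT_g1 r hr ht).1)
  rwa [← this]

lemma ZZ_small (r : ℝ) (hr : 1 < r) (ε : ℝ) (hε : 0 < ε) : ∃ M₀ : ℕ, ∀ M, M₀ ≤ M → ZZ r M ≤ 1 + ε := by
  obtain ⟨M₀, h⟩ := sig_near (GG_g1 r hr) ε hε
  refine ⟨M₀, fun M hM => csSup_le ⟨_, 1, rough_one_mem M, rfl⟩ ?_⟩
  rintro _ ⟨n, hn, rfl⟩
  have := h M hM n hn
  rw [sig_g1, ← Complex.ofReal_one, ← Complex.ofReal_sub, Complex.norm_real] at this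
  have := (le_abs_self _).trans this
  linarith

lemma ZZ_prime (r : ℝ) (hr : 1 < r) (N : ℕ) (hq : (N+1).Prime) :
    ZZ r N * (1 - ((N+1:ℕ):ℝ)^(-r)) ≤ ZZ r (N+1) := by
  set y := ((N+1:ℕ):ℝ)^(-r) with hy
  have hy0 : 0 ≤ y := by positivity
  have hy1 : y ≤ 1/2 := by
    have := half_of_prime (GG_g1 r hr) hq
    rw [g1_apply, Complex.norm_real] at this
    exact (le_abs_self _).trans this
  rw [← le_div_iff₀ (by linarith)]
  refine csSup_le ⟨_, 1, rough_one_mem N, rfl⟩ ?_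
  rintro _ ⟨n, hn, rfl⟩
  obtain ⟨k, n', hn', rfl⟩ := rough_split hq hn
  have hcop : ((N+1)^k).Coprime n' := by
    refine smo_rough_coprime (N := N+1) ?_ hn'
    have := smo_mul_pow hq (smo_one N) k
    rwa [one_mul] at this
  rw [ss_mul r hcop, le_div_iff₀ (by linarith)]
  have h1 : ss r ((N+1)^k) * (1 - y) ≤ 1 := by
    have e : (ss r ((N+1)^k) : ℂ) = ((∑ i ∈ Finset.range (k+1), y^i : ℝ) : ℂ) := by
      rw [← sig_g1, sig_prime_pow _ hq, g1_apply, ← hy]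
      push_cast; rfl
    rw [Complex.ofReal_inj.1 e, geom_sum_mul_neg]
    have : 0 ≤ y^(k+1) := by positivity
    linarith
  have h2 := ss_le_ZZ r hr hn'
  have h3 := one_le_ss r hn'.1
  calc _ = (ss r ((N+1)^k) * (1 - y)) * ss r n' := by ring
    _ ≤ 1 * ss r n' := by gcongr
    _ ≤ _ := by linarith

lemma ZZ_big (r : ℝ) (hr : 1 < r) (N : ℕ) (hH : ∀ w : ℂ,
    ‖w‖ ≤ 4 * (N:ℝ)^(-r) → ((∀ n, (g1 r n).im = 0) → w.im = 0) →
    ∃ t ∈ TT (g1 r) N, ∃ t' ∈ TT (g1 r) N, t = (1 + w) * t') : 1 + 4 * (N:ℝ)^(-r) ≤ ZZ r N := by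
  have h0 : 0 ≤ 4 * (N:ℝ)^(-r) := by positivity
  obtain ⟨t, ht, t', ht', h⟩ := hH ((4 * (N:ℝ)^(-r) : ℝ) : ℂ)
    (by rw [Complex.norm_real, Real.norm_of_nonneg h0]) (fun _ => Complex.ofReal_im _)
  have h1 := (TT_g1 r hr ht).2.2
  have h2 := (TT_g1 r hr ht').2.1
  have h3 : t.re = (1 + 4 * (N:ℝ)^(-r)) * t'.re := by
    rw [h, ← Complex.ofReal_one, ← Complex.ofReal_add, Complex.re_ofReal_mul]
  nlinarith

noncomputable def FF (x : ℝ) (k : ℕ) : ℝ := ∑ i ∈ Finset.range (k+1), x^i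

lemma FF_succ (x : ℝ) (k : ℕ) : FF x (k+1) = FF x k + x^(k+1) := by
  unfold FF; rw [Finset.sum_range_succ]

lemma FF_zero (x : ℝ) : FF x 0 = 1 := by simp [FF]

lemma FF_mono {x : ℝ} (hx : 0 ≤ x) : Monotone (FF x) :=
  monotone_nat_of_le_succ fun k => by rw [FF_succ]; have : 0 ≤ x^(k+1) := by positivity
                                      linarith

lemma FF_one_le {x : ℝ} (hx : 0 ≤ x) (k : ℕ) : 1 ≤ FF x k := by
  rw [← FF_zero x]; exact FF_mono hx (Nat.zero_le k)

lemma rho_anti {x : ℝ} (hx : 0 ≤ x) (hx1 : x ≤ 1) : Antitone fun k => FF x (k+1) / FF x k := by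
  refine antitone_nat_of_succ_le fun k => ?_
  have h1 := FF_one_le hx k
  have h2 := FF_one_le hx (k+1)
  rw [div_le_div_iff₀ (by linarith) (by linarith), FF_succ x (k+1), FF_succ x k]
  have h3 : 0 ≤ x^(k+1) := by positivity
  have h4 : x^(k+2) = x * x^(k+1) := by ring
  have h5 : x^(k+2) ≤ x^(k+1) := by nlinarith
  have h6 : x^(k+2) * FF x k ≤ x^(k+1) * FF x k := by gcongr
  rw [show k+1+1 = k+2 from rfl]
  nlinarith

lemma find_N (r : ℝ) (hr : 1 < r) (N₀ p₀ : ℕ) (hH : ∀ N, N₀ ≤ N → 1 + 4 * (N:ℝ)^(-r) ≤ ZZ r N)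
    (hp₀ : p₀.Prime) (h0 : N₀ ≤ p₀) (m : ℕ) (x : ℝ) (hx : x = (p₀:ℝ)^(-r)) (hx2 : x ≤ 1/2) :
    ∃ N, p₀ ≤ N ∧ (∀ k, k < m → ZZ r N < FF x (k+1) / FF x k) ∧ (∀ k, m ≤ k → FF x (k+1) / FF x k ≤ ZZ r N) := by
  have hxpos : 0 < x := by rw [hx]; exact Real.rpow_pos_of_pos (by exact_mod_cast hp₀.pos) _
  have anti := rho_anti hxpos.le (by linarith)
  have hZp : FF x 1 / FF x 0 ≤ ZZ r p₀ := by
    have := hH p₀ h0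
    rw [← hx] at this
    rw [FF_succ, FF_zero]
    simp
    linarith
  rcases Nat.eq_zero_or_pos m with rfl | hm
  · exact ⟨p₀, le_rfl, fun k hk => absurd hk (Nat.not_lt_zero k), fun k _ => (anti (Nat.zero_le k)).trans hZp⟩
  obtain ⟨l, rfl⟩ : ∃ l, m = l + 1 := ⟨m - 1, by omega⟩
  have hF := FF_one_le hxpos.le l
  have hF1 := FF_one_le hxpos.le (l+1)
  set β := x^(l+1) / FF x l with hβ
  have hρ : FF x (l+1) / FF x l = 1 + β := by
    rw [FF_succ, hβ]; field_simp
  have hβ0 : 0 < β := by positivity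
  have hβ1 : β ≤ 1 := by
    rw [hβ, div_le_one (by linarith)]
    exact (pow_le_one₀ hxpos.le (by linarith)).trans hF
  have hρ2 : FF x (l+2) / FF x (l+1) ≤ 1 + β/2 := by
    rw [FF_succ, add_div, div_self (by linarith)]
    have : x^(l+1+1) / FF x (l+1) ≤ β / 2 := by
      rw [hβ, div_div, div_le_div_iff₀ (by linarith) (by linarith)]
      have e1 : x^(l+1+1) = x * x^(l+1) := by ring
      have e2 := FF_mono hxpos.le (Nat.le_succ l)
      have e3 : 0 ≤ x^(l+1) := by positivity
      rw [e1]
      calc x * x^(l+1) * (FF x l * 2) ≤ 1/2 * x^(l+1) * (FF x l * 2) := by gcongr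
        _ = x^(l+1) * FF x l := by ring
        _ ≤ _ := by gcongr
    linarith
  obtain ⟨M₀, hM₀⟩ := ZZ_small r hr (β/2) (by linarith)
  have hex : ∃ N, p₀ ≤ N ∧ ¬ ZZ r N < 1 + β ∧ ZZ r (N+1) < 1 + β := by
    by_contra hcon
    push Not at hcon
    have : ∀ k, 1 + β ≤ ZZ r (p₀ + k) := by
      intro k
      induction k with
      | zero =>
        refine le_trans ?_ hZp
        rw [← hρ]; exact anti (Nat.zero_le l)
      | succ k ih => exact hcon (p₀ + k) (by omega) ih
    have h1 := this M₀
    have h2 := hM₀ (p₀ + M₀) (by omega)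
    linarith
  obtain ⟨N, hN, h1, h2⟩ := hex
  have hq : (N+1).Prime := by
    by_contra hnp
    apply h1
    unfold ZZ at h2 ⊢
    rwa [rough_succ_of_not_prime hnp] at h2
  have h3 := ZZ_prime r hr N hq
  have h4 := hH (N+1) (by omega)
  set y := ((N+1:ℕ):ℝ)^(-r) with hy
  have hy0 : 0 ≤ y := by positivity
  have h5 : 1 + β / 2 ≤ ZZ r (N+1) := by
    by_cases h : β / 2 ≤ 4 * y
    · linarith
    · push Not at h h1
      have : (1 + β) * (1 - y) ≤ ZZ r N * (1 - y) := by
        have : 0 ≤ 1 - y := by linarith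
        gcongr
      nlinarith
  refine ⟨N+1, by omega, fun k hk => ?_, fun k hk => ?_⟩
  · refine lt_of_lt_of_le h2 ?_
    rw [← hρ]; exact anti (by omega)
  · exact (anti hk).trans (hρ2.trans h5)

def MM (p₀ N : ℕ) : ℕ := ∏ p ∈ (Finset.range (N+1)).filter (fun p => p.Prime ∧ p ≠ p₀), p

lemma MM_pos (p₀ N : ℕ) : 0 < MM p₀ N :=
  Finset.prod_pos fun p hp => (Finset.mem_filter.1 hp).2.1.pos

lemma dvd_MM {p₀ N p : ℕ} (hp : p.Prime) : p ∣ MM p₀ N ↔ p ≤ N ∧ p ≠ p₀ := by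
  unfold MM
  rw [Prime.dvd_finsetProd_iff hp.prime]
  constructor
  · rintro ⟨q, hq, hpq⟩
    simp only [Finset.mem_filter, Finset.mem_range] at hq
    rw [(Nat.prime_dvd_prime_iff_eq hp hq.2.1).1 hpq]
    exact ⟨by omega, hq.2.2⟩
  · rintro ⟨h1, h2⟩
    exact ⟨p, by simp only [Finset.mem_filter, Finset.mem_range]; exact ⟨by omega, hp, h2⟩, dvd_rfl⟩

noncomputable def gM (p₀ N : ℕ) (r : ℝ) : ℕ →* ℂ := gchi (1 : DirichletCharacter ℂ (MM p₀ N)) r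

lemma gM_coprime {p₀ N : ℕ} {r : ℝ} {n : ℕ} (h : n.Coprime (MM p₀ N)) : gM p₀ N r n = g1 r n := by
  unfold gM
  rw [gchi_apply, g1_apply, MulChar.one_apply ((ZMod.isUnit_iff_coprime n _).2 h), one_mul]

lemma gM_not_coprime {p₀ N : ℕ} {r : ℝ} {n : ℕ} (h : ¬ n.Coprime (MM p₀ N)) : gM p₀ N r n = 0 := by
  unfold gM
  rw [gchi_apply, MulChar.map_nonunit _ (fun hu => h ((ZMod.isUnit_iff_coprime n _).1 hu)), zero_mul]

lemma sig_gM_rough {p₀ N : ℕ} (r : ℝ) {b : ℕ} (hb : b ∈ Rough N) : sig (gM p₀ N r) b = sig (g1 r) b := by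
  refine Finset.sum_congr rfl fun d hd => gM_coprime ?_
  refine Nat.coprime_of_dvd fun p hp h1 h2 => ?_
  have h3 := hb.2 p hp (h1.trans (Nat.dvd_of_mem_divisors hd))
  have h4 := ((dvd_MM hp).1 h2).1
  omega

lemma sig_gM_smo {p₀ N : ℕ} (r : ℝ) {u : ℕ} (hu : u ∈ Smo N) (hp : ¬ p₀ ∣ u) : sig (gM p₀ N r) u = 1 := by
  unfold sig
  rw [Finset.sum_eq_single 1]
  · simp
  · intro d hd hd1
    refine gM_not_coprime fun hcop => ?_
    have hdu := Nat.dvd_of_mem_divisors hd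
    have hpr := Nat.minFac_prime hd1
    have h1 := (Nat.minFac_dvd d).trans hdu
    have h2 : d.minFac ∣ MM p₀ N := (dvd_MM hpr).2 ⟨hu.2 _ hpr h1, fun e => hp (e ▸ h1)⟩
    have := Nat.dvd_gcd (Nat.minFac_dvd d) h2
    rw [hcop] at this
    exact hpr.ne_one (Nat.dvd_one.1 this)
  · intro h
    exact absurd (Nat.one_mem_divisors.2 hu.1.ne') h

lemma sig_gM_pow {p₀ N : ℕ} (r : ℝ) (hp : p₀.Prime) (k : ℕ) :
    sig (gM p₀ N r) (p₀^k) = (FF ((p₀:ℝ)^(-r)) k : ℂ) := by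
  have hc : p₀.Coprime (MM p₀ N) := by
    rw [hp.coprime_iff_not_dvd, dvd_MM hp]
    exact fun h => h.2 rfl
  rw [sig_prime_pow _ hp, gM_coprime hc, g1_apply]
  unfold FF
  push_cast; rfl

lemma image_gM {p₀ N : ℕ} (r : ℝ) (hp : p₀.Prime) (hpN : p₀ ≤ N) :
    sig (gM p₀ N r) '' Rough 0 =
      ⋃ k : ℕ, (fun t => (FF ((p₀:ℝ)^(-r)) k : ℂ) * t) '' (sig (g1 r) '' Rough N) := by
  have hsm : ∀ k, p₀^k ∈ Smo N := fun k => ⟨pow_pos hp.pos k, fun q hq hd =>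
    (Nat.le_of_dvd hp.pos (hq.dvd_of_dvd_pow hd)).trans hpN⟩
  ext z
  rw [Set.mem_iUnion]
  constructor
  · rintro ⟨n, hn, rfl⟩
    obtain ⟨a, ha, b, hb, rfl⟩ := smo_rough_split N hn.1
    obtain ⟨k, u, hu, rfl⟩ := Nat.exists_eq_pow_mul_and_not_dvd ha.1.ne' p₀ hp.ne_one
    have huS : u ∈ Smo N := ⟨Nat.pos_of_mul_pos_left ha.1, fun q hq hd => ha.2 q hq (hd.mul_left _)⟩
    refine ⟨k, _, ⟨b, hb, rfl⟩, ?_⟩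
    rw [sig_smo_rough _ ha hb, sig_mul _ (((hp.coprime_iff_not_dvd).2 hu).pow_left k),
      sig_gM_smo r huS hu, sig_gM_rough r hb, sig_gM_pow r hp]
    simp
  · rintro ⟨k, _, ⟨b, hb, rfl⟩, rfl⟩
    refine ⟨p₀^k * b, ?_, ?_⟩
    · rw [rough_zero]; exact Nat.mul_pos (hsm k).1 hb.1
    · rw [sig_smo_rough _ (hsm k) hb, sig_gM_rough r hb, sig_gM_pow r hp]

lemma attained (r : ℝ) (hr : 1 < r) (m : ℕ) : ∃ p₀ N : ℕ,
    Nat.card (ConnectedComponents (TT (gM p₀ N r) 0)) = m + 1 := by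
  have hG := GG_g1 r hr
  obtain ⟨N₀, hH⟩ := HH (g1 r) r hG
  obtain ⟨p₀, hp0, hp₀⟩ := Nat.exists_infinite_primes N₀
  set x := (p₀:ℝ)^(-r) with hx
  have hx2 : x ≤ 1/2 := by
    have := half_of_prime hG hp₀
    rw [g1_apply, Complex.norm_real] at this
    exact (le_abs_self _).trans this
  have hx0 : 0 ≤ x := by positivity
  obtain ⟨N, hpN, hlt, hge⟩ := find_N r hr N₀ p₀ (fun N hN => ZZ_big r hr N (hH N hN)) hp₀ hp0 m x hx hx2
  refine ⟨p₀, N, ?_⟩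
  have hpc := TT_preconn hG N₀ hH N (hp0.trans hpN)
  have hcpt := TT_compact hG N
  have hF1 := FF_one_le hx0
  set T := TT (g1 r) N with hT
  set G : ℕ → Set ℂ := fun k => (fun t => (FF x k : ℂ) * t) '' T with hGdef
  have hGpc : ∀ k, IsPreconnected (G k) := fun k => hpc.image _ (by fun_prop)
  have hGcl : ∀ k, IsClosed (G k) := fun k => (hcpt.image (by fun_prop)).isClosed
  have hGne : ∀ k, (G k).Nonempty := fun k => ⟨_, 1, one_mem_TT _ _, rfl⟩
  have hGre : ∀ k, ∀ z ∈ G k, FF x k ≤ z.re ∧ z.re ≤ FF x k * ZZ r N := by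
    rintro k _ ⟨t, ht, rfl⟩
    obtain ⟨_, h1, h2⟩ := TT_g1 r hr ht
    have := hF1 k
    simp only [Complex.re_ofReal_mul]
    constructor <;> nlinarith
  set Gi : Set ℂ := ⋃ k : ℕ, G (m + k) with hGi
  have hGipc : IsPreconnected Gi := by
    refine IsPreconnected.iUnion_of_chain (fun k => hGpc _) fun k => ?_
    have h1 := hF1 (m+k)
    have h2 := FF_mono hx0 (Nat.le_succ (m+k))
    refine ⟨(FF x (m+k+1) : ℂ), ⟨((FF x (m+k+1) / FF x (m+k) : ℝ) : ℂ), ?_, ?_⟩, ⟨1, one_mem_TT _ _, ?_⟩⟩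
    · refine ivt_TT r hr hpc _ ?_ (hge _ (by omega))
      rw [le_div_iff₀ (by linarith)]; simpa using h2
    · simp only
      rw [← Complex.ofReal_mul, mul_div_cancel₀ _ (by linarith)]
    · simp [add_assoc]
  let K : Fin (m+1) → Set ℂ := fun i => if (i:ℕ) < m then G i else closure Gi
  have hKlow : ∀ i, ∀ z ∈ K i, FF x i ≤ z.re := by
    intro i z hz
    by_cases hi : (i:ℕ) < m
    · simp only [K, if_pos hi] at hz
      exact (hGre _ z hz).1
    · simp only [K, if_neg hi] at hz
      have him : (i:ℕ) = m := by omega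
      rw [him]
      refine closure_minimal (t := {z : ℂ | FF x m ≤ z.re}) ?_ (isClosed_le continuous_const Complex.continuous_re) hz
      intro z hz
      obtain ⟨k, hk⟩ := Set.mem_iUnion.1 hz
      exact (FF_mono hx0 (Nat.le_add_right m k)).trans (hGre _ z hk).1
  have hKhigh : ∀ i : Fin (m+1), (i:ℕ) < m → ∀ z ∈ K i, z.re < FF x (i+1) := by
    intro i hi z hz
    simp only [K, if_pos hi] at hz
    have h1 := (hGre _ z hz).2
    have h2 := hlt i hi
    have h3 := hF1 i
    rw [lt_div_iff₀ (by linarith)] at h2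
    linarith
  have hKd : ∀ i j : Fin (m+1), i < j → Disjoint (K i) (K j) := by
    intro i j hij
    rw [Set.disjoint_left]
    intro z hz1 hz2
    have hij' : (i:ℕ) < j := hij
    have h1 := hKhigh i (by omega) z hz1
    have h2 := hKlow j z hz2
    have h3 := FF_mono hx0 (show (i:ℕ)+1 ≤ j from hij')
    linarith
  have hKcl : ∀ i, IsClosed (K i) := by
    intro i
    by_cases hi : (i:ℕ) < m
    · simp only [K, if_pos hi]; exact hGcl _
    · simp only [K, if_neg hi]; exact isClosed_closure
  refine card_pieces (m+1) K _ ?_ hKcl ?_ ?_ ?_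
  · unfold TT
    rw [image_gM r hp₀ hpN]
    have hGsub : ∀ k, G k ⊆ closure (⋃ k : ℕ, (fun t => (FF x k : ℂ) * t) '' (sig (g1 r) '' Rough N)) := by
      intro k
      refine (image_closure_subset_closure_image (by fun_prop)).trans (closure_mono ?_)
      exact Set.subset_iUnion (fun k : ℕ => (fun t => (FF x k : ℂ) * t) '' (sig (g1 r) '' Rough N)) k
    apply subset_antisymm
    · refine closure_minimal ?_ (isClosed_iUnion_of_finite hKcl)
      refine Set.iUnion_subset fun k => ?_
      have hk : (fun t => (FF x k : ℂ) * t) '' (sig (g1 r) '' Rough N) ⊆ G k := Set.image_mono subset_closure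
      refine hk.trans ?_
      by_cases hkm : k < m
      · have : G k = K ⟨k, by omega⟩ := by simp only [K, if_pos hkm]
        rw [this]; exact Set.subset_iUnion K _
      · have : closure Gi = K ⟨m, by omega⟩ := by simp [K]
        refine Set.Subset.trans ?_ (Set.subset_iUnion K ⟨m, by omega⟩)
        rw [← this]
        refine Set.Subset.trans ?_ subset_closure
        have := Set.subset_iUnion (fun k => G (m+k)) (k - m)
        simpa only [show m + (k - m) = k by omega] using this
    · refine Set.iUnion_subset fun i => ?_
      by_cases hi : (i:ℕ) < m
      · simp only [K, if_pos hi]; exact hGsub _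
      · simp only [K, if_neg hi]
        exact closure_minimal (Set.iUnion_subset fun k => hGsub _) isClosed_closure
  · intro i j hij
    rcases lt_or_gt_of_ne hij with h | h
    · exact hKd i j h
    · exact (hKd j i h).symm
  · intro i
    by_cases hi : (i:ℕ) < m
    · simp only [K, if_pos hi]; exact hGpc _
    · simp only [K, if_neg hi]; exact hGipc.closure
  · intro i
    by_cases hi : (i:ℕ) < m
    · simp only [K, if_pos hi]; exact hGne _
    · simp only [K, if_neg hi]
      exact ((hGne (m+0)).mono (Set.subset_iUnion (fun k => G (m+k)) 0)).mono subset_closure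

/-- There is `r₀ > 0` such that for every `r > r₀`, the set of numbers of connected components
of the closure of the image of `σ_{r,ℚ,χ}`, as `χ` ranges over all Dirichlet characters (of all
moduli), is exactly the set of all positive integers. -/
theorem stmt2 :
    ∃ r₀ : ℝ, 0 < r₀ ∧ ∀ r : ℝ, r₀ < r →
      {n : ℕ | ∃ (m : ℕ) (χ : DirichletCharacter ℂ m), 0 < m ∧
          Nat.card (ConnectedComponents
            ↥(closure (sigmaQ χ r '' {k : ℕ | 0 < k}))) = n}
        = {n : ℕ | 0 < n} := by
  refine ⟨1, one_pos, fun r hr => Set.ext fun n => ⟨?_, ?_⟩⟩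
  · rintro ⟨m, χ, hm, rfl⟩
    exact card_pos' hm χ r hr
  · intro hn
    have hn' : 0 < n := hn
    obtain ⟨m, rfl⟩ : ∃ m, n = m + 1 := ⟨n - 1, by omega⟩
    obtain ⟨p₀, N, h⟩ := attained r hr m
    refine ⟨MM p₀ N, 1, MM_pos p₀ N, ?_⟩
    rw [closure_eq_TT]
    exact h
end

section
/- Let r ≥ 3 be a real number and let χ be a Dirichlet character of modulus m. Then the closure of σ_{r,ℚ,χ}(ℕ) in ℂ has at least 2^{π_m(2r−2) − δ_m} connected components, where π_m(x) is the number of primes p ≤ x with p ∤ m, and δ_m = 0 if m is even and δ_m = 1 if m is odd. -/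
/-- `π_m(x)`: the number of primes `p ≤ x` that do not divide `m`. -/
noncomputable def pim (m : ℕ) (x : ℝ) : ℕ :=
  {p : ℕ | p.Prime ∧ (p : ℝ) ≤ x ∧ ¬ p ∣ m}.ncard

open Finset in
lemma aux_top {A : Type*} {L : Type*} (f : A → ℂ) (T : Set A) (lab : A → L) (e : ℝ) (he : 0 < e)
    (hsep : ∀ a ∈ T, ∀ b ∈ T, lab a ≠ lab b → e ≤ ‖f a - f b‖)
    (a b : A) (ha : a ∈ T) (hb : b ∈ T) (x y : closure (f '' T)) (hx : (x : ℂ) = f a)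
    (hy : (y : ℂ) = f b)
    (hxy : (x : ConnectedComponents (closure (f '' T))) = y) : lab a = lab b := by
  let U : L → Set (closure (f '' T)) :=
    fun l => ⋃ c ∈ {c | c ∈ T ∧ lab c = l}, {z | dist (z : ℂ) (f c) < e / 2}
  let V : Set (closure (f '' T)) :=
    ⋃ c ∈ {c | c ∈ T ∧ lab c ≠ lab a}, {z | dist (z : ℂ) (f c) < e / 2}
  have ho : ∀ c, IsOpen {z : closure (f '' T) | dist (z : ℂ) (f c) < e / 2} := fun c =>
    isOpen_lt (by fun_prop) continuous_const
  have hU : IsOpen (U (lab a)) := isOpen_biUnion fun c _ => ho c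
  have hV : IsOpen V := isOpen_biUnion fun c _ => ho c
  have hc : (U (lab a))ᶜ = V := by
    ext z
    simp only [U, V, Set.mem_compl_iff, Set.mem_iUnion, Set.mem_ofPred_eq, not_exists]
    constructor
    · intro h
      obtain ⟨w, ⟨c, hcT, rfl⟩, hw⟩ := Metric.mem_closure_iff.1 z.2 (e / 2) (by positivity)
      exact ⟨c, ⟨hcT, fun hl => h c ⟨hcT, hl⟩ hw⟩, hw⟩
    · rintro ⟨c, ⟨hcT, hl⟩, hw⟩ d ⟨hdT, hd⟩ hw'
      have h1 := hsep c hcT d hdT (by rw [hd]; exact hl)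
      rw [← dist_eq_norm] at h1
      have h2 := dist_triangle_left (f c) (f d) (z : ℂ)
      linarith
  have hclopen : IsClopen (U (lab a)) := ⟨by rw [← isOpen_compl_iff, hc]; exact hV, hU⟩
  have hxU : x ∈ U (lab a) := by
    simp only [U, Set.mem_iUnion, Set.mem_ofPred_eq]
    exact ⟨a, ⟨ha, rfl⟩, by rw [hx, dist_self]; positivity⟩
  have hyU : y ∈ U (lab a) := by
    apply hclopen.connectedComponent_subset hxU
    rw [ConnectedComponents.coe_eq_coe.1 hxy]
    exact mem_connectedComponent
  by_contra hne
  have : y ∈ V := by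
    simp only [V, Set.mem_iUnion, Set.mem_ofPred_eq]
    exact ⟨b, ⟨hb, fun h => hne h.symm⟩, by rw [hy, dist_self]; positivity⟩
  rw [← hc] at this
  exact this hyU

/-- the comparison function -/
noncomputable def auxC (r : ℝ) (d : ℕ) : ℝ := (d : ℝ) ^ (1 - r) / (2 * (r - 1))

lemma aux_bern (r : ℝ) (hr : 3 ≤ r) (d : ℕ) (hd : 0 < d) :
    ((d + 2 : ℕ) : ℝ) ^ (-r) < auxC r d - auxC r (d + 2) := by
  have hd' : (0 : ℝ) < d := by exact_mod_cast hd
  have hr1 : 0 < 2 * (r - 1) := by linarith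
  unfold auxC
  rw [← sub_div, lt_div_iff₀ hr1]
  set t : ℝ := ((d + 2 : ℕ) : ℝ) with ht
  have htd : t = d + 2 := by rw [ht]; push_cast; ring
  have ht0 : 0 < t := by linarith
  have hB := one_add_mul_self_le_rpow_one_add (s := 2 / (d : ℝ)) (p := r - 1)
    (by have : 0 < 2 / (d : ℝ) := by positivity
        linarith) (by linarith)
  have hs : 1 + 2 / (d : ℝ) = t / d := by rw [htd]; field_simp
  rw [hs, Real.div_rpow ht0.le hd'.le] at hB
  have e1 : t ^ (-r) = t ^ (1 - r) / t := by
    rw [← Real.rpow_sub_one ht0.ne']; congr 1; ring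
  have e2 : (d : ℝ) ^ (1 - r) = ((d : ℝ) ^ (r - 1))⁻¹ := by
    rw [← Real.rpow_neg hd'.le]; congr 1; ring
  have e3 : t ^ (1 - r) = (t ^ (r - 1))⁻¹ := by
    rw [← Real.rpow_neg ht0.le]; congr 1; ring
  rw [e1, e2, e3]
  have p1 : 0 < (d : ℝ) ^ (r - 1) := by positivity
  have p2 : 0 < t ^ (r - 1) := by positivity
  have key : 1 + 2 * (r - 1) / t < t ^ (r - 1) / (d : ℝ) ^ (r - 1) := by
    refine lt_of_lt_of_le ?_ hB
    have : 2 * (r - 1) / t < 2 * (r - 1) / d := div_lt_div_of_pos_left hr1 hd' (by linarith)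
    have h2 : (r - 1) * (2 / (d : ℝ)) = 2 * (r - 1) / d := by ring
    linarith
  have k2 := mul_lt_mul_of_pos_left key (inv_pos.2 p2)
  have k3 : (t ^ (r - 1))⁻¹ * (t ^ (r - 1) / (d : ℝ) ^ (r - 1)) = ((d : ℝ) ^ (r - 1))⁻¹ := by
    field_simp
  rw [k3] at k2
  have k4 : (t ^ (r - 1))⁻¹ * (1 + 2 * (r - 1) / t)
    = (t ^ (r - 1))⁻¹ / t * (2 * (r - 1)) + (t ^ (r - 1))⁻¹ := by ring
  rw [k4] at k2
  linarith

lemma aux_tail_odd (r : ℝ) (hr : 3 ≤ r) (d : ℕ) (hd : 0 < d) (hodd : ¬ 2 ∣ d) (v : ℕ → ℝ)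
    (hv : ∀ k, v k ≤ (k : ℝ) ^ (-r)) (hv0 : ∀ k, 2 ∣ k → v k = 0) (K : ℕ) :
    ∑ k ∈ Finset.Ioc d (d + 2 * (K + 1)), v k ≤
      auxC r d - auxC r (d + 2 * (K + 1)) -
        (auxC r d - auxC r (d + 2) - ((d + 2 : ℕ) : ℝ) ^ (-r)) := by
  have step : ∀ K, ∑ k ∈ Finset.Ioc d (d + 2 * (K + 1)), v k =
      ∑ k ∈ Finset.Ioc d (d + 2 * K), v k + v (d + 2 * (K + 1)) := by
    intro K
    rw [show d + 2 * (K + 1) = d + 2 * K + 1 + 1 by ring,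
      Finset.sum_Ioc_succ_top (by omega), Finset.sum_Ioc_succ_top (by omega),
      hv0 (d + 2 * K + 1) (by omega), add_zero]
  induction K with
  | zero =>
    rw [step]
    have := hv (d + 2)
    simp only [mul_zero, add_zero, Finset.Ioc_self, Finset.sum_empty, zero_add, mul_one]
    linarith
  | succ K ih =>
    rw [step]
    have h1 := hv (d + 2 * (K + 1 + 1))
    have h2 := aux_bern r hr (d + 2 * (K + 1)) (by omega)
    rw [show d + 2 * (K + 1) + 2 = d + 2 * (K + 1 + 1) by ring] at h2
    linarith

lemma aux_tail_two (r : ℝ) (hr : 3 ≤ r) (v : ℕ → ℝ)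
    (hv : ∀ k, v k ≤ (k : ℝ) ^ (-r)) (K : ℕ) :
    ∑ k ∈ Finset.Ioc 2 (2 + K), v k ≤
      (2 : ℝ) ^ (-r) * (2 / 3 - 4 / (((K : ℝ) + 2) * (K + 3))) := by
  induction K with
  | zero => norm_num
  | succ K ih =>
    rw [← add_assoc, Finset.sum_Ioc_succ_top (by omega)]
    have h1 := hv (2 + K + 1)
    have hp : (0 : ℝ) < 2 ^ (-r) := by positivity
    set x : ℝ := ((2 + K + 1 : ℕ) : ℝ) with hx
    have hxK : x = K + 3 := by rw [hx]; push_cast; ring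
    have hK : (0 : ℝ) ≤ K := by positivity
    have h2 : x ^ (-r) ≤ (2 : ℝ) ^ (-r) * (8 / x ^ 3) := by
      have e1 : x ^ (-r) = (2 : ℝ) ^ (-r) * (x / 2) ^ (-r) := by
        rw [← Real.mul_rpow (by norm_num) (by linarith)]; congr 1; ring
      rw [e1]
      refine mul_le_mul_of_nonneg_left ?_ hp.le
      calc (x / 2) ^ (-r) ≤ (x / 2) ^ (-3 : ℝ) :=
            Real.rpow_le_rpow_of_exponent_le (by linarith) (by linarith)
        _ = 8 / x ^ 3 := by
            rw [Real.rpow_neg (by linarith)]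
            norm_cast
            rw [div_pow, inv_div]; norm_num
    have h3 : 8 / x ^ 3 ≤ 4 / (((K : ℝ) + 2) * (K + 3)) - 4 / (((K : ℝ) + 3) * (K + 4)) := by
      have : 4 / (((K : ℝ) + 2) * (K + 3)) - 4 / (((K : ℝ) + 3) * (K + 4))
        = 8 / (((K : ℝ) + 2) * (K + 3) * (K + 4)) := by
        field_simp; ring
      rw [this, hxK]
      apply div_le_div_of_nonneg_left (by norm_num) (by positivity)
      nlinarith
    have h4 := mul_le_mul_of_nonneg_left h3 hp.le
    push_cast
    rw [show (K : ℝ) + 1 + 2 = K + 3 by ring, show (K : ℝ) + 1 + 3 = K + 4 by ring]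
    rw [mul_sub] at h4 ih ⊢
    linarith

/-- single term -/
noncomputable def auxH {m : ℕ} (χ : DirichletCharacter ℂ m) (r : ℝ) (n d : ℕ) : ℂ :=
  if d ∣ n then χ ((d : ℕ) : ZMod m) * (((d : ℝ) ^ (-r) : ℝ) : ℂ) else 0

lemma sigma_eq {m : ℕ} (χ : DirichletCharacter ℂ m) (r : ℝ) (n N : ℕ) (hn : 0 < n) (hN : n ≤ N) :
    sigmaQ χ r n = ∑ d ∈ Finset.Icc 1 N, auxH χ r n d := by
  unfold sigmaQ auxH
  rw [← Finset.sum_filter]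
  apply Finset.sum_congr _ fun _ _ => rfl
  ext d
  simp only [Nat.mem_divisors, Finset.mem_filter, Finset.mem_Icc]
  constructor
  · rintro ⟨h, _⟩
    exact ⟨⟨Nat.pos_of_dvd_of_pos h hn, (Nat.le_of_dvd hn h).trans hN⟩, h⟩
  · rintro ⟨_, h⟩
    exact ⟨h, hn.ne'⟩

lemma aux_norm_term {m : ℕ} (χ : DirichletCharacter ℂ m) (r : ℝ) (d : ℕ) :
    ‖χ ((d : ℕ) : ZMod m) * (((d : ℝ) ^ (-r) : ℝ) : ℂ)‖ ≤ (d : ℝ) ^ (-r) := by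
  have h : 0 ≤ (d : ℝ) ^ (-r) := by positivity
  rw [norm_mul, Complex.norm_real, Real.norm_of_nonneg h]
  have := χ.norm_le_one (d : ZMod m)
  nlinarith

lemma aux_norm_diff {m : ℕ} (χ : DirichletCharacter ℂ m) (r : ℝ) (n n' d : ℕ) :
    ‖auxH χ r n d - auxH χ r n' d‖ ≤ (d : ℝ) ^ (-r) := by
  have h := aux_norm_term χ r d
  have h0 : 0 ≤ (d : ℝ) ^ (-r) := by positivity
  unfold auxH
  split_ifs <;> simp only [sub_self, norm_zero, sub_zero, zero_sub, norm_neg] <;> assumption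

lemma aux_norm_diff_eq {m : ℕ} (χ : DirichletCharacter ℂ m) (r : ℝ) (n n' d : ℕ)
    (hd : d.Coprime m) (h : ¬ (d ∣ n ↔ d ∣ n')) :
    ‖auxH χ r n d - auxH χ r n' d‖ = (d : ℝ) ^ (-r) := by
  have h0 : 0 ≤ (d : ℝ) ^ (-r) := by positivity
  have h1 : ‖χ ((d : ℕ) : ZMod m) * (((d : ℝ) ^ (-r) : ℝ) : ℂ)‖ = (d : ℝ) ^ (-r) := by
    rw [norm_mul, Complex.norm_real, Real.norm_of_nonneg h0]
    have := χ.unit_norm_eq_one (ZMod.unitOfCoprime d hd)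
    rw [ZMod.coe_unitOfCoprime] at this
    rw [this, one_mul]
  unfold auxH
  split_ifs with a b b <;> simp only [sub_self, norm_zero, sub_zero, zero_sub, norm_neg] <;>
    first | assumption | (exfalso; tauto)

lemma aux_zero {m : ℕ} (χ : DirichletCharacter ℂ m) (r : ℝ) (n n' d : ℕ)
    (hd : d.Coprime m → (d ∣ n ↔ d ∣ n')) :
    auxH χ r n d - auxH χ r n' d = 0 := by
  by_cases hc : d.Coprime m
  · unfold auxH
    simp [hd hc]
  · unfold auxH
    rw [χ.map_nonunit (by rwa [ZMod.isUnit_iff_coprime])]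
    simp

lemma aux_core {m : ℕ} (χ : DirichletCharacter ℂ m) (r : ℝ) (n n' d N : ℕ)
    (hn : 0 < n) (hn' : 0 < n') (hN : n ≤ N) (hN' : n' ≤ N) (hd1 : 0 < d) (hdN : d ≤ N)
    (hd : d.Coprime m) (h : ¬ (d ∣ n ↔ d ∣ n'))
    (hlt : ∀ k, k < d → k.Coprime m → (k ∣ n ↔ k ∣ n')) :
    (d : ℝ) ^ (-r) - ∑ k ∈ Finset.Ioc d N, ‖auxH χ r n k - auxH χ r n' k‖ ≤
      ‖sigmaQ χ r n - sigmaQ χ r n'‖ := by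
  rw [sigma_eq χ r n N hn hN, sigma_eq χ r n' N hn' hN', ← Finset.sum_sub_distrib]
  have hsplit : ∑ k ∈ Finset.Icc 1 N, (auxH χ r n k - auxH χ r n' k) =
      (auxH χ r n d - auxH χ r n' d) +
        ∑ k ∈ Finset.Ioc d N, (auxH χ r n k - auxH χ r n' k) := by
    rw [← Finset.sum_insert (s := Finset.Ioc d N) (a := d)
      (f := fun k => auxH χ r n k - auxH χ r n' k) (by simp)]
    symm
    apply Finset.sum_subset
    · intro k hk
      simp only [Finset.mem_insert, Finset.mem_Ioc, Finset.mem_Icc] at hk ⊢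
      omega
    · intro k hk hk'
      simp only [Finset.mem_insert, Finset.mem_Ioc, Finset.mem_Icc] at hk hk'
      exact aux_zero χ r n n' k (hlt k (by omega))
  rw [hsplit, ← aux_norm_diff_eq χ r n n' d hd h]
  have h1 := norm_sum_le (Finset.Ioc d N) (fun k => auxH χ r n k - auxH χ r n' k)
  have h2 := norm_sub_le_norm_add (auxH χ r n d - auxH χ r n' d)
    (∑ k ∈ Finset.Ioc d N, (auxH χ r n k - auxH χ r n' k))
  linarith

/-- labels -/
noncomputable def auxL (m : ℕ) (X : ℝ) (n : ℕ) : Finset ℕ :=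
  open Classical in
  if 2 ∣ n ∧ ¬ 2 ∣ m then {2} else n.divisors.filter (fun d => d.Coprime m ∧ (d : ℝ) ≤ X)

lemma aux_even {m : ℕ} (χ : DirichletCharacter ℂ m) (r : ℝ) (hr : 3 ≤ r) (n n' : ℕ)
    (hn : 0 < n) (hn' : 0 < n') (hm : ¬ 2 ∣ m) (h : ¬ (2 ∣ n ↔ 2 ∣ n')) :
    (2 : ℝ) ^ (-r) / 3 ≤ ‖sigmaQ χ r n - sigmaQ χ r n'‖ := by
  have h1 := aux_core χ r n n' 2 (2 + (n + n')) hn hn' (by omega) (by omega) (by norm_num)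
    (by omega) ((Nat.Prime.coprime_iff_not_dvd Nat.prime_two).2 hm) h (by
      intro k hk _
      interval_cases k
      · simp [hn.ne', hn'.ne']
      · simp)
  have h2 := aux_tail_two r hr (fun k => ‖auxH χ r n k - auxH χ r n' k‖)
    (fun k => aux_norm_diff χ r n n' k) (n + n')
  have hp : (0 : ℝ) < 2 ^ (-r) := by positivity
  have h3 : 0 ≤ (2 : ℝ) ^ (-r) * (4 / ((((n + n' : ℕ) : ℝ) + 2) * (((n + n' : ℕ) : ℝ) + 3))) := by
    positivity
  rw [mul_sub] at h2
  push_cast at h1 h2 h3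
  linarith

lemma aux_odd {m : ℕ} (χ : DirichletCharacter ℂ m) (r : ℝ) (hr : 3 ≤ r) (n n' d : ℕ)
    (hn : 0 < n) (hn' : 0 < n') (hd1 : 0 < d) (hdX : (d : ℝ) ≤ 2 * r - 2) (hodd : ¬ 2 ∣ d)
    (hev : 2 ∣ m ∨ (¬ 2 ∣ n ∧ ¬ 2 ∣ n'))
    (hd : d.Coprime m) (h : ¬ (d ∣ n ↔ d ∣ n'))
    (hlt : ∀ k, k < d → k.Coprime m → (k ∣ n ↔ k ∣ n')) :
    auxC r d - auxC r (d + 2) - ((d + 2 : ℕ) : ℝ) ^ (-r) ≤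
      ‖sigmaQ χ r n - sigmaQ χ r n'‖ := by
  have h1 := aux_core χ r n n' d (d + 2 * (n + n' + 1)) hn hn' (by omega) (by omega) hd1
    (by omega) hd h hlt
  have h2 := aux_tail_odd r hr d hd1 hodd (fun k => ‖auxH χ r n k - auxH χ r n' k‖)
    (fun k => aux_norm_diff χ r n n' k) (by
      intro k hk
      simp only [norm_eq_zero]
      apply aux_zero
      intro hc
      rcases hev with hev | ⟨ha, hb⟩
      · exact absurd (Nat.dvd_gcd hk hev) (by rw [hc]; norm_num)
      · exact iff_of_false (fun hh => ha (hk.trans hh)) (fun hh => hb (hk.trans hh))) (n + n')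
  have hd' : (0 : ℝ) < d := by exact_mod_cast hd1
  have hr1 : 0 < 2 * (r - 1) := by linarith
  have h3 : auxC r d ≤ (d : ℝ) ^ (-r) := by
    unfold auxC
    rw [div_le_iff₀ hr1, show 1 - r = -r + 1 by ring, Real.rpow_add_one hd'.ne']
    have : 0 < (d : ℝ) ^ (-r) := by positivity
    exact mul_le_mul_of_nonneg_left (by linarith) this.le
  have h4 : 0 ≤ auxC r (d + 2 * (n + n' + 1)) := by
    unfold auxC; positivity
  linarith

lemma aux_sep {m : ℕ} (χ : DirichletCharacter ℂ m) (r : ℝ) (hr : 3 ≤ r) :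
    ∃ e : ℝ, 0 < e ∧ ∀ n ∈ {k : ℕ | 0 < k}, ∀ n' ∈ {k : ℕ | 0 < k},
      auxL m (2 * r - 2) n ≠ auxL m (2 * r - 2) n' →
        e ≤ ‖sigmaQ χ r n - sigmaQ χ r n'‖ := by
  classical
  set M := ⌊2 * r - 2⌋₊ with hM
  let E : ℕ → ℝ := fun d => auxC r d - auxC r (d + 2) - ((d + 2 : ℕ) : ℝ) ^ (-r)
  have hM1 : 1 ≤ M := Nat.le_floor (by push_cast; linarith)
  obtain ⟨d1, hd1, hmin⟩ := Finset.exists_min_image (Finset.Icc 1 M) E ⟨1, by simp [hM1]⟩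
  have hE1 : 0 < E d1 := by
    have := aux_bern r hr d1 (Finset.mem_Icc.1 hd1).1
    simp only [E]; linarith
  refine ⟨min (2 ^ (-r) / 3) (E d1), lt_min (by positivity) hE1, ?_⟩
  intro n hn n' hn' hne
  simp only [Set.mem_ofPred_eq] at hn hn'
  by_cases hpar : ¬ 2 ∣ m ∧ ¬ (2 ∣ n ↔ 2 ∣ n')
  · exact (min_le_left _ _).trans (aux_even χ r hr n n' hn hn' hpar.1 hpar.2)
  refine (min_le_right _ _).trans ?_
  have hev : 2 ∣ m ∨ (¬ 2 ∣ n ∧ ¬ 2 ∣ n') := by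
    by_contra hcon
    apply hne
    unfold auxL
    rw [if_pos (by tauto), if_pos (by tauto)]
  unfold auxL at hne
  rw [if_neg (by tauto), if_neg (by tauto)] at hne
  have hex : ∃ d : ℕ, d.Coprime m ∧ (d : ℝ) ≤ 2 * r - 2 ∧ ¬ (d ∣ n ↔ d ∣ n') := by
    by_contra hcon
    push Not at hcon
    apply hne
    ext d
    simp only [Finset.mem_filter, Nat.mem_divisors]
    have := hcon d
    have := hn.ne'
    have := hn'.ne'
    tauto
  obtain ⟨hc, hX, hdiff⟩ := Nat.find_spec hex
  have hmin' := fun k => Nat.find_min hex (m := k)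
  set d := Nat.find hex
  have hd0 : 0 < d := by
    rcases Nat.eq_zero_or_pos d with h0 | h0
    · rw [h0] at hdiff
      simp [hn.ne', hn'.ne'] at hdiff
    · exact h0
  refine le_trans (hmin d (Finset.mem_Icc.2 ⟨hd0, Nat.le_floor hX⟩)) ?_
  refine aux_odd χ r hr n n' d hn hn' hd0 hX ?_ hev hc hdiff ?_
  · intro h2
    rcases hev with hev | ⟨ha, hb⟩
    · exact absurd (Nat.dvd_gcd h2 hev) (by rw [hc]; norm_num)
    · exact hdiff (iff_of_false (fun hh => ha (h2.trans hh)) (fun hh => hb (h2.trans hh)))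
  · intro k hk hkc
    by_contra hcon
    refine hmin' k hk ⟨hkc, le_trans ?_ hX, hcon⟩
    exact_mod_cast hk.le

/-- For `r ≥ 3` and a Dirichlet character `χ` of modulus `m`, the closure of the image of
`σ_{r,ℚ,χ}` has at least `2 ^ (π_m(2r−2) − δ_m)` connected components, where `δ_m = 0` if `m`
is even and `δ_m = 1` if `m` is odd. -/
theorem stmt3 (r : ℝ) (hr : 3 ≤ r) (m : ℕ) (hm : 0 < m) (χ : DirichletCharacter ℂ m) :
    ((2 ^ (pim m (2 * r - 2) - (if 2 ∣ m then 0 else 1)) : ℕ) : Cardinal) ≤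
      Cardinal.mk (ConnectedComponents
        ↥(closure (sigmaQ χ r '' {k : ℕ | 0 < k}))) := by
  classical
  obtain ⟨e, he, hsep⟩ := aux_sep χ r hr
  let P : Finset ℕ := (Finset.range (⌊2 * r - 2⌋₊ + 1)).filter
    (fun p => p.Prime ∧ (p : ℝ) ≤ 2 * r - 2 ∧ ¬ p ∣ m ∧ p ≠ 2)
  have hP : ∀ p, p ∈ P ↔ p.Prime ∧ (p : ℝ) ≤ 2 * r - 2 ∧ ¬ p ∣ m ∧ p ≠ 2 := by
    intro p
    simp only [P, Finset.mem_filter, Finset.mem_range, and_iff_right_iff_imp]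
    rintro ⟨_, h, _⟩
    exact Nat.lt_succ_of_le (Nat.le_floor h)
  have hcard : pim m (2 * r - 2) - (if 2 ∣ m then 0 else 1) ≤ P.card := by
    rw [Nat.sub_le_iff_le_add]
    unfold pim
    have hsub : {p : ℕ | p.Prime ∧ (p : ℝ) ≤ 2 * r - 2 ∧ ¬ p ∣ m} ⊆
        ((P ∪ (if 2 ∣ m then ∅ else {2}) : Finset ℕ) : Set ℕ) := by
      rintro p ⟨h1, h2, h3⟩
      rw [Finset.mem_coe, Finset.mem_union]
      by_cases hp : p = 2
      · right
        subst hp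
        rw [if_neg h3]; simp
      · left
        exact (hP p).2 ⟨h1, h2, h3, hp⟩
    refine (Set.ncard_le_ncard hsub (Finset.finite_toSet _)).trans ?_
    rw [Set.ncard_coe_finset]
    refine (Finset.card_union_le _ _).trans ?_
    split_ifs <;> simp
  have hprime : ∀ S ∈ P.powerset, ∀ q : ℕ, q.Prime → (q ∣ ∏ p ∈ S, p ↔ q ∈ S) := by
    intro S hS q hq
    rw [Finset.mem_powerset] at hS
    rw [hq.prime.dvd_finsetProd_iff]
    constructor
    · rintro ⟨p, hp, hqp⟩
      rw [(Nat.prime_dvd_prime_iff_eq hq ((hP p).1 (hS hp)).1).1 hqp]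
      exact hp
    · intro h
      exact ⟨q, h, dvd_rfl⟩
  have hpos : ∀ S ∈ P.powerset, 0 < ∏ p ∈ S, p := by
    intro S hS
    rw [Finset.mem_powerset] at hS
    exact Finset.prod_pos fun p hp => ((hP p).1 (hS hp)).1.pos
  have hlab : ∀ S ∈ P.powerset, ∀ q ∈ P, (q ∈ auxL m (2 * r - 2) (∏ p ∈ S, p) ↔ q ∈ S) := by
    intro S hS q hq
    obtain ⟨h1, h2, h3, h4⟩ := (hP q).1 hq
    have hodd : ¬ 2 ∣ ∏ p ∈ S, p := by
      rw [hprime S hS 2 Nat.prime_two]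
      intro h
      exact ((hP 2).1 (Finset.mem_powerset.1 hS h)).2.2.2 rfl
    unfold auxL
    rw [if_neg (by tauto), Finset.mem_filter, Nat.mem_divisors, hprime S hS q h1]
    have := (hpos S hS).ne'
    have := (Nat.Prime.coprime_iff_not_dvd h1).2 h3
    tauto
  let F : P.powerset → ConnectedComponents ↥(closure (sigmaQ χ r '' {k : ℕ | 0 < k})) :=
    fun S => ((⟨sigmaQ χ r (∏ p ∈ S.1, p), subset_closure ⟨_, hpos S.1 S.2, rfl⟩⟩ :
      ↥(closure (sigmaQ χ r '' {k : ℕ | 0 < k}))) : ConnectedComponents _)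
  have hF : Function.Injective F := by
    intro S S' h
    have hl := aux_top (sigmaQ χ r) {k : ℕ | 0 < k} (auxL m (2 * r - 2)) e he hsep
      (∏ p ∈ S.1, p) (∏ p ∈ S'.1, p) (hpos S.1 S.2) (hpos S'.1 S'.2) _ _ rfl rfl h
    apply Subtype.ext
    ext q
    by_cases hq : q ∈ P
    · rw [← hlab S.1 S.2 q hq, ← hlab S'.1 S'.2 q hq, hl]
    · exact iff_of_false (fun hh => hq (Finset.mem_powerset.1 S.2 hh))
        (fun hh => hq (Finset.mem_powerset.1 S'.2 hh))
  have h1 := Cardinal.mk_le_of_injective hF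
  refine le_trans ?_ h1
  rw [Cardinal.mk_coe_finset, Finset.card_powerset]
  exact Nat.cast_le.2 (Nat.pow_le_pow_right (by norm_num) hcard)
end
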